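/- arXiv:2109.04944 — 5 statements merged into one kernel-verified Lean document; each statement's English description precedes it below -/
import Mathlib

section
/- There is an absolute constant C > 0 such that the following holds with δ(ε) = ε^C / C and n₀(ε) = C·ε^{-C}, for all ε ∈ (0,1). Let H be a 3-uniform hypergraph on n ≥ n₀(ε) vertices which contains fewer than δ(ε)·n⁴ induced copies of D₂. Then there is a partition V(H) = X ∪ Y with X, Y nonempty such that (X,Y) is ε-homogeneous. -/
open Finset

/-- The number of induced copies of `D₂` (4 vertices spanning exactly 2 edges). -/
def inducedD2Count {V : Type} [Fintype V] [DecidableEq V] (E : Finset (Finset V)) : ℕ :=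
  (((Finset.univ : Finset V).powersetCard 4).filter
    (fun S => (E.filter (fun e => e ⊆ S)).card = 2)).card

/-- `e(X,X,Y)`: the number of edges with two vertices in `X` and one vertex in `Y`. -/
def eXXY {V : Type} [DecidableEq V] (E : Finset (Finset V)) (X Y : Finset V) : ℕ :=
  (E.filter (fun e => (e ∩ X).card = 2 ∧ (e ∩ Y).card = 1)).card

/-- `d(X,X,Y) = e(X,X,Y) / (C(|X|,2)·|Y|)`. -/
noncomputable def dXXY {V : Type} [DecidableEq V] (E : Finset (Finset V))
    (X Y : Finset V) : ℝ :=
  (eXXY E X Y : ℝ) / ((X.card.choose 2 : ℝ) * (Y.card : ℝ))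

/-- The pair `(X,Y)` is `ε`-homogeneous. -/
noncomputable def EpsHomogeneous {V : Type} [DecidableEq V]
    (E : Finset (Finset V)) (X Y : Finset V) (ε : ℝ) : Prop :=
  (dXXY E X Y ≥ 1 - ε ∧ dXXY E Y X ≥ 1 - ε) ∨ (dXXY E X Y ≤ ε ∧ dXXY E Y X ≤ ε)

/-!
Put `x = ε / 100`, and call a pair of vertices mixed if its codegree is at least `x² n` both in
`E` and in its complement. The hypothesis and the conclusion are invariant under
complementation, so it is enough to find a cut that is sparse for one of the two hypergraphs.

If there are many mixed pairs, averaging gives a mixed pair `u`, `v` contained in few 7-tuples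
of vertices with an induced copy of `D₂`. Let `N` consist of the `w` with `u v w` an edge and
let `M` be the set of remaining vertices. In the bipartite graph `{(w, z) ∈ N × M | u w z ∈ E}`
an induced matching of size two forces an induced `D₂`, so the neighbourhoods of the vertices of
`M` are close to a chain, and after complementing if necessary many `z ∈ M` have few neighbours.
These light vertices form one side of the cut; the degree threshold is taken inside a window
containing few degrees, so that each light vertex is separated from each heavy vertex by many
`w ∈ N`, which places every remaining edge across the cut in many induced copies of `D₂`.

If there are few mixed pairs, take a typical `v`. There are few pairs `(a, b)` with `v a` of low
codegree in the complement and `v b` of low codegree in `E`, since each `v a b` is either a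
non-edge or an edge; so almost all pairs `v w` have low codegree in `E`, or almost all have low
codegree in the complement. Two vertices of the same kind whose own codegree is low form one
side of a sparse cut.
-/

namespace ThreeGraph

section Basic

variable {V : Type*} [DecidableEq V] {E : Finset (Finset V)} {a b c d : V}

/-- Adjacency in the hypergraph `E`; in a 3-uniform `E` it forces `a`, `b`, `c` to be distinct. -/
def Adj (E : Finset (Finset V)) (a b c : V) : Prop := {a, b, c} ∈ E

instance (E : Finset (Finset V)) (a b c : V) : Decidable (Adj E a b c) :=
  inferInstanceAs (Decidable (_ ∈ E))

theorem adj_swap_left : Adj E a b c ↔ Adj E b a c := by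
  rw [Adj, Adj, insert_comm]

theorem adj_swap_right : Adj E a b c ↔ Adj E a c b := by
  rw [Adj, Adj, pair_comm]

theorem card_triple_eq_three : #({a, b, c} : Finset V) = 3 ↔ a ≠ b ∧ a ≠ c ∧ b ≠ c := by
  grind

theorem Adj.ne (hE : (E : Set (Finset V)).Sized 3) (h : Adj E a b c) : a ≠ b ∧ a ≠ c ∧ b ≠ c :=
  card_triple_eq_three.1 (hE h)

/-- A set of vertices all of whose 4-subsets span a number of edges different from two, that is, one
containing no induced copy of `D₂`. -/
def D2Free (E : Finset (Finset V)) (S : Finset V) : Prop :=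
  ∀ T ⊆ S, #T = 4 → #{e ∈ E | e ⊆ T} ≠ 2

theorem D2Free.mono {S T : Finset V} (hT : D2Free E T) (hST : S ⊆ T) : D2Free E S :=
  fun U hU ↦ hT U (hU.trans hST)

theorem card_edges_subset_eq_card_filter_erase (hE : (E : Set (Finset V)).Sized 3) {T : Finset V}
    (hT : #T = 4) : #{e ∈ E | e ⊆ T} = #{y ∈ T | T.erase y ∈ E} := by
  refine (card_bij (fun y _ ↦ T.erase y) ?_ ?_ ?_).symm
  · simp +contextual [erase_subset]
  · exact fun y hy z _ hyz ↦ (erase_inj T (mem_filter.1 hy).1).1 hyz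
  · intro e he
    obtain ⟨heE, heT⟩ := mem_filter.1 he
    have hcard : #(T \ e) = 1 := by rw [card_sdiff_of_subset heT, hT, hE heE]
    obtain ⟨y, hy⟩ := card_eq_one.1 hcard
    have hTe : T.erase y = e := by rw [erase_eq, ← hy, Finset.sdiff_sdiff_eq_self heT]
    have hyT : y ∈ T := (mem_sdiff.1 (hy ▸ mem_singleton_self y)).1
    exact ⟨y, mem_filter.2 ⟨hyT, hTe ▸ heE⟩, hTe⟩

theorem D2Free.sum_adj_ne_two {S : Finset V} (hS : D2Free E S)
    (hE : (E : Set (Finset V)).Sized 3) (hsub : {a, b, c, d} ⊆ S) (hnodup : [a, b, c, d].Nodup) :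
    (if Adj E a b c then 1 else 0) + (if Adj E a b d then 1 else 0) +
      (if Adj E a c d then 1 else 0) + (if Adj E b c d then 1 else 0) ≠ 2 := by
  have hcard : #({a, b, c, d} : Finset V) = 4 := by grind
  have herase : ({a, b, c, d} : Finset V).erase a = {b, c, d} ∧
      ({a, b, c, d} : Finset V).erase b = {a, c, d} ∧
      ({a, b, c, d} : Finset V).erase c = {a, b, d} ∧
      ({a, b, c, d} : Finset V).erase d = {a, b, c} := by grind
  have h := hS _ hsub hcard
  rw [card_edges_subset_eq_card_filter_erase hE hcard, card_filter, sum_insert (by grind),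
    sum_insert (by grind), sum_insert (by grind), sum_singleton] at h
  simp only [herase] at h
  grind [Adj]

end Basic

section Complement

variable {V : Type*} [Fintype V] [DecidableEq V] {E : Finset (Finset V)} {a b c : V}

/-- The complementary 3-uniform hypergraph. -/
def co (E : Finset (Finset V)) : Finset (Finset V) :=
  {e ∈ univ.powersetCard 3 | e ∉ E}

theorem sized_co (E : Finset (Finset V)) : (co E : Set (Finset V)).Sized 3 :=
  fun _ he ↦ (mem_powersetCard.1 (mem_filter.1 he).1).2

theorem co_co (hE : (E : Set (Finset V)).Sized 3) : co (co E) = E := by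
  ext e
  have := @hE e
  simp only [co, mem_filter, mem_powersetCard, subset_univ, true_and, mem_coe] at this ⊢
  tauto

theorem adj_co : Adj (co E) a b c ↔ (a ≠ b ∧ a ≠ c ∧ b ≠ c) ∧ ¬Adj E a b c := by
  simp only [Adj, co, mem_filter, mem_powersetCard, subset_univ, true_and, card_triple_eq_three]

theorem card_edges_subset_add_co (hE : (E : Set (Finset V)).Sized 3) (T : Finset V) :
    #{e ∈ E | e ⊆ T} + #{e ∈ co E | e ⊆ T} = (#T).choose 3 := by
  have hleft : {e ∈ E | e ⊆ T} = {e ∈ T.powersetCard 3 | e ∈ E} := by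
    ext e
    have := @hE e
    simp only [mem_filter, mem_powersetCard, mem_coe] at this ⊢
    tauto
  have hright : {e ∈ co E | e ⊆ T} = {e ∈ T.powersetCard 3 | e ∉ E} := by
    ext e
    simp only [co, mem_filter, mem_powersetCard, subset_univ, true_and]
    tauto
  rw [hleft, hright, card_filter_add_card_filter_not, card_powersetCard]

theorem d2Free_co (hE : (E : Set (Finset V)).Sized 3) {S : Finset V} :
    D2Free (co E) S ↔ D2Free E S := by
  refine forall₃_congr fun T _ hT ↦ not_congr ?_
  have h := card_edges_subset_add_co hE T
  rw [hT, show Nat.choose 4 3 = 4 from rfl] at h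
  omega

/-- The vertices completing the pair `u`, `v` to an edge. -/
def nbhd (E : Finset (Finset V)) (u v : V) : Finset V := {w | Adj E u v w}

@[simp] theorem mem_nbhd {u v w : V} : w ∈ nbhd E u v ↔ Adj E u v w := by simp [nbhd]

theorem nbhd_comm (u v : V) : nbhd E u v = nbhd E v u := by
  ext w
  simp only [mem_nbhd, adj_swap_left]

theorem nbhd_self (hE : (E : Set (Finset V)).Sized 3) (v : V) : nbhd E v v = ∅ :=
  eq_empty_of_forall_notMem fun _ hw ↦ ((mem_nbhd.1 hw).ne hE).1 rfl

end Complement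

section ForbiddenConfigurations

variable {V : Type*} [Fintype V] [DecidableEq V] {E : Finset (Finset V)}
  {u v k l w x p q r : V}

theorem D2Free.adj_left_iff_adj_right (hE : (E : Set (Finset V)).Sized 3)
    (hS : D2Free E {u, v, w, p}) (hw : Adj E u v w) (hp : Adj (co E) u v p) :
    Adj E u w p ↔ Adj E v w p := by
  have := hS.sum_adj_ne_two hE (a := u) (b := v) (c := w) (d := p) subset_rfl
  have := hw.ne hE
  grind [adj_co]

theorem D2Free.adj_of_adj_of_not_adj (hE : (E : Set (Finset V)).Sized 3)
    (hS : D2Free E {u, v, w, x, p}) (hw : Adj E u v w) (hx : Adj E u v x) (hp : Adj (co E) u v p)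
    (hwp : Adj E u w p) (hxp : ¬Adj E u x p) : Adj E u w x ∧ Adj E w x p := by
  have huwxp := hS.sum_adj_ne_two hE (a := u) (b := w) (c := x) (d := p) (by grind)
  have hvwxp := hS.sum_adj_ne_two hE (a := v) (b := w) (c := x) (d := p) (by grind)
  have huvwx := hS.sum_adj_ne_two hE (a := u) (b := v) (c := w) (d := x) (by grind)
  have := D2Free.adj_left_iff_adj_right hE (hS.mono (by grind)) hw hp
  have := D2Free.adj_left_iff_adj_right hE (hS.mono (by grind)) hx hp
  have := hw.ne hE
  have := hx.ne hE
  grind [adj_co]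

theorem D2Free.not_adj_of_adj_of_not_adj (hE : (E : Set (Finset V)).Sized 3)
    (hS : D2Free E {u, v, w, p, q}) (hw : Adj E u v w) (hp : Adj (co E) u v p)
    (hq : Adj (co E) u v q) (hwp : Adj E u w p) (hwq : ¬Adj E u w q) :
    ¬Adj E u p q ∧ ¬Adj E w p q := by
  have huwpq := hS.sum_adj_ne_two hE (a := u) (b := w) (c := p) (d := q) (by grind)
  have hvwpq := hS.sum_adj_ne_two hE (a := v) (b := w) (c := p) (d := q) (by grind)
  have huvpq := hS.sum_adj_ne_two hE (a := u) (b := v) (c := p) (d := q) (by grind)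
  have := D2Free.adj_left_iff_adj_right hE (hS.mono (by grind)) hw hp
  have := D2Free.adj_left_iff_adj_right hE (hS.mono (by grind)) hw hq
  have := hw.ne hE
  grind [adj_co]

theorem not_d2Free_of_induced_matching (hE : (E : Set (Finset V)).Sized 3) (hw : Adj E u v w)
    (hx : Adj E u v x) (hp : Adj (co E) u v p) (hq : Adj (co E) u v q) (hwp : Adj E u w p)
    (hwq : ¬Adj E u w q) (hxp : ¬Adj E u x p) (hxq : Adj E u x q) :
    ¬D2Free E {u, v, w, x, p, q} := by
  intro hS
  have := D2Free.adj_of_adj_of_not_adj hE (hS.mono (by grind)) hw hx hp hwp hxp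
  have := D2Free.adj_of_adj_of_not_adj hE (hS.mono (by grind)) hx hw hq hxq hwq
  have := D2Free.not_adj_of_adj_of_not_adj hE (hS.mono (by grind)) hw hp hq hwp hwq
  have := D2Free.not_adj_of_adj_of_not_adj hE (hS.mono (by grind)) hx hq hp hxq hxp
  have hwxpq := hS.sum_adj_ne_two hE (a := w) (b := x) (c := p) (d := q) (by grind)
  have := hw.ne hE
  have := hx.ne hE
  grind [adj_co, adj_swap_left, adj_swap_right]

theorem not_d2Free_of_adj_conbhd_conbhd (hE : (E : Set (Finset V)).Sized 3) (hw : Adj E u v w)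
    (hp : Adj (co E) u v p) (hq : Adj (co E) u v q) (hr : Adj (co E) u v r) (hwp : Adj E u w p)
    (hwq : Adj E u w q) (hwr : ¬Adj E u w r) (hpqr : Adj E p q r) :
    ¬D2Free E {u, v, w, p, q, r} := by
  intro hS
  have := D2Free.not_adj_of_adj_of_not_adj hE (hS.mono (by grind)) hw hp hr hwp hwr
  have := D2Free.not_adj_of_adj_of_not_adj hE (hS.mono (by grind)) hw hq hr hwq hwr
  have hwpqr := hS.sum_adj_ne_two hE (a := w) (b := p) (c := q) (d := r) (by grind)
  have huwpq := hS.sum_adj_ne_two hE (a := u) (b := w) (c := p) (d := q) (by grind)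
  have hupqr := hS.sum_adj_ne_two hE (a := u) (b := p) (c := q) (d := r) (by grind)
  have := hw.ne hE
  have := hpqr.ne hE
  grind [adj_co]

theorem not_d2Free_of_adj_nbhd_nbhd (hE : (E : Set (Finset V)).Sized 3) (hk : Adj E u v k)
    (hl : Adj E u v l) (hr : Adj (co E) u v r) (hkr : ¬Adj E u k r) (hlr : ¬Adj E u l r)
    (hklr : Adj E k l r) : ¬D2Free E {u, v, k, l, r} := by
  intro hS
  have := D2Free.adj_left_iff_adj_right hE (hS.mono (by grind)) hk hr
  have := D2Free.adj_left_iff_adj_right hE (hS.mono (by grind)) hl hr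
  have huklr := hS.sum_adj_ne_two hE (a := u) (b := k) (c := l) (d := r) (by grind)
  have hvklr := hS.sum_adj_ne_two hE (a := v) (b := k) (c := l) (d := r) (by grind)
  have huvkl := hS.sum_adj_ne_two hE (a := u) (b := v) (c := k) (d := l) (by grind)
  have := hk.ne hE
  have := hl.ne hE
  have := hklr.ne hE
  grind [adj_co]

theorem not_d2Free_of_adj_nbhd_conbhd (hE : (E : Set (Finset V)).Sized 3) (hk : Adj E u v k)
    (hw : Adj E u v w) (hp : Adj (co E) u v p) (hr : Adj (co E) u v r) (hkr : ¬Adj E u k r)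
    (hwp : Adj E u w p) (hwr : ¬Adj E u w r) (hkpr : Adj E k p r) :
    ¬D2Free E {u, v, k, w, p, r} := by
  intro hS
  have := D2Free.not_adj_of_adj_of_not_adj hE (hS.mono (by grind)) hw hp hr hwp hwr
  have hukpr := hS.sum_adj_ne_two hE (a := u) (b := k) (c := p) (d := r) (by grind)
  have hkwr : ¬Adj E k w r := fun h ↦
    not_d2Free_of_adj_nbhd_nbhd hE hk hw hr hkr hwr h (hS.mono (by grind))
  have hkp : ¬Adj E u k p := by
    have := hk.ne hE
    have := hkpr.ne hE
    grind [adj_co]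
  have := D2Free.adj_of_adj_of_not_adj hE (hS.mono (by grind)) hw hk hp hwp hkp
  have hkwpr := hS.sum_adj_ne_two hE (a := k) (b := w) (c := p) (d := r) (by grind)
  have := hw.ne hE
  have := hkpr.ne hE
  grind [adj_co, adj_swap_left]

end ForbiddenConfigurations

section DirtyTuples

theorem card_filter_subset_image_le {ι α : Type*} [Fintype ι] [DecidableEq ι] [Fintype α]
    [DecidableEq α] (T : Finset α) : #{f : ι → α | T ⊆ univ.image f} ≤
      Fintype.card ι ^ #T * Fintype.card α ^ (Fintype.card ι - #T) := by
  have hsection : ({f : ι → α | T ⊆ univ.image f} : Finset (ι → α)) ⊆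
      univ.biUnion fun g : T → ι ↦ {f : ι → α | ∀ t, f (g t) = t} := by
    intro f hf
    have h (t : T) : ∃ i, f i = t := by simpa using (mem_filter.1 hf).2 t.2
    choose g hg using h
    exact mem_biUnion.2 ⟨g, mem_univ g, mem_filter.2 ⟨mem_univ f, hg⟩⟩
  have hfiber (g : T → ι) :
      #{f : ι → α | ∀ t, f (g t) = t} ≤ Fintype.card α ^ (Fintype.card ι - #T) := by
    by_cases hg : Function.Injective g
    · have hcard : Fintype.card ({i // i ∉ Set.range g} → α) =
          Fintype.card α ^ (Fintype.card ι - #T) := by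
        rw [Fintype.card_fun, Fintype.card_subtype_compl,
          ← Fintype.card_congr (Equiv.ofInjective g hg), Fintype.card_coe]
      rw [← hcard, ← card_univ]
      refine card_le_card_of_injOn (fun f i ↦ f i) (by simp) fun f hf f' hf' hff' ↦ ?_
      funext i
      by_cases hi : i ∈ Set.range g
      · obtain ⟨t, rfl⟩ := hi
        rw [(mem_filter.1 hf).2, (mem_filter.1 hf').2]
      · exact congrFun hff' ⟨i, hi⟩
    · rw [filter_false_of_mem, card_empty]
      · exact Nat.zero_le _
      · refine fun f _ hf ↦ hg fun t t' htt' ↦ Subtype.ext ?_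
        rw [← hf t, ← hf t', htt']
  calc #{f : ι → α | T ⊆ univ.image f}
      ≤ ∑ g : T → ι, #{f : ι → α | ∀ t, f (g t) = t} :=
        (card_le_card hsection).trans card_biUnion_le
    _ ≤ ∑ _g : T → ι, Fintype.card α ^ (Fintype.card ι - #T) := sum_le_sum fun g _ ↦ hfiber g
    _ = Fintype.card ι ^ #T * Fintype.card α ^ (Fintype.card ι - #T) := by
      rw [sum_const, card_univ, Fintype.card_fun, Fintype.card_coe, smul_eq_mul]

variable {V : Type*} [Fintype V] [DecidableEq V] {E : Finset (Finset V)} {u v : V}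

open Classical in
/-- The 5-tuples of vertices that, together with `u` and `v`, contain an induced copy of `D₂`. -/
noncomputable def dirty (E : Finset (Finset V)) (u v : V) : Finset (V × V × V × V × V) :=
  {y | ¬D2Free E {u, v, y.1, y.2.1, y.2.2.1, y.2.2.2.1, y.2.2.2.2}}

theorem mem_dirty {a b c d e : V} :
    (a, b, c, d, e) ∈ dirty E u v ↔ ¬D2Free E {u, v, a, b, c, d, e} := by
  simp [dirty]

theorem dirty_co (hE : (E : Set (Finset V)).Sized 3) (u v : V) :
    dirty (co E) u v = dirty E u v := by
  ext ⟨a, b, c, d, e⟩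
  rw [mem_dirty, mem_dirty, d2Free_co hE]

open Classical in
theorem card_filter_not_d2Free_le {V : Type} [Fintype V] [DecidableEq V]
    (E : Finset (Finset V)) :
    #{f : Fin 7 → V | ¬D2Free E (univ.image f)} ≤
      inducedD2Count E * (7 ^ 4 * Fintype.card V ^ 3) := by
  have hcover : ({f : Fin 7 → V | ¬D2Free E (univ.image f)} : Finset (Fin 7 → V)) ⊆
      ({T ∈ univ.powersetCard 4 | #{e ∈ E | e ⊆ T} = 2} : Finset (Finset V)).biUnion
        fun T ↦ {f : Fin 7 → V | T ⊆ univ.image f} := by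
    intro f hf
    simp only [mem_filter, mem_univ, true_and, D2Free, not_forall, not_not] at hf
    obtain ⟨T, hTf, hT, hTE⟩ := hf
    simp only [mem_biUnion, mem_filter, mem_univ, true_and, mem_powersetCard, subset_univ]
    exact ⟨T, ⟨hT, hTE⟩, hTf⟩
  refine (card_le_card hcover).trans (card_biUnion_le_card_mul _ _ _ fun T hT ↦ ?_)
  have hT : #T = 4 := (mem_powersetCard.1 (mem_filter.1 hT).1).2
  have h := card_filter_subset_image_le (ι := Fin 7) T
  rwa [hT, Fintype.card_fin] at h

theorem sum_card_dirty_le {V : Type} [Fintype V] [DecidableEq V] (E : Finset (Finset V)) :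
    ∑ p : V × V, #(dirty E p.1 p.2) ≤ inducedD2Count E * (7 ^ 4 * Fintype.card V ^ 3) := by
  classical
  rw [← card_sigma]
  refine le_trans ?_ (card_filter_not_d2Free_le E)
  refine card_le_card_of_injOn
    (fun z ↦ ![z.1.1, z.1.2, z.2.1, z.2.2.1, z.2.2.2.1, z.2.2.2.2.1, z.2.2.2.2.2]) ?_ ?_
  · rintro ⟨⟨u, v⟩, a, b, c, d, e⟩ hz
    have himage : univ.image ![u, v, a, b, c, d, e] = {u, v, a, b, c, d, e} := by
      ext y
      simp [Fin.exists_fin_succ, eq_comm]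
    simpa [himage, mem_dirty] using hz
  · rintro ⟨⟨u, v⟩, a, b, c, d, e⟩ _ ⟨⟨u', v'⟩, a', b', c', d', e'⟩ _ h
    simp_all

end DirtyTuples

section SparseCut

variable {V : Type*} [DecidableEq V] {E : Finset (Finset V)} {X Y : Finset V} {ε : ℝ}

/-- The number of edges with two vertices in `X` and one in `Y`, counted with the two vertices in
`X` ordered; unlike `eXXY`, it is a sum over pairs of vertices. -/
def ordCount (E : Finset (Finset V)) (X Y : Finset V) : ℕ :=
  #{t ∈ (X ×ˢ X) ×ˢ Y | Adj E t.1.1 t.1.2 t.2}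

theorem ordCount_eq_sum (E : Finset (Finset V)) (X Y : Finset V) :
    ordCount E X Y = ∑ p ∈ X ×ˢ X, #{y ∈ Y | Adj E p.1 p.2 y} := by
  simp_rw [ordCount, card_filter]
  rw [sum_product]

theorem ordCount_eq_sum_apex (E : Finset (Finset V)) (X Y : Finset V) :
    ordCount E X Y = ∑ y ∈ Y, #{p ∈ X ×ˢ X | Adj E p.1 p.2 y} := by
  simp_rw [ordCount, card_filter]
  rw [sum_product_right]

variable [Fintype V]

/-- A partition of the vertex set into two parts of size at least two with few edges crossing it.
The bounds on `ordCount` are strong enough to make both crossing densities at most `ε`. -/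
structure SparseCut (E : Finset (Finset V)) (X Y : Finset V) (ε : ℝ) : Prop where
  disjoint : Disjoint X Y
  union_eq_univ : X ∪ Y = univ
  two_le_card_left : 2 ≤ #X
  two_le_card_right : 2 ≤ #Y
  ordCount_left_le : ordCount E X Y ≤ ε / 4 * #X ^ 2 * #Y
  ordCount_right_le : ordCount E Y X ≤ ε / 4 * #Y ^ 2 * #X

theorem SparseCut.left_nonempty (h : SparseCut E X Y ε) : X.Nonempty :=
  card_pos.1 (pos_of_gt h.two_le_card_left)

theorem SparseCut.right_nonempty (h : SparseCut E X Y ε) : Y.Nonempty :=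
  card_pos.1 (pos_of_gt h.two_le_card_right)

end SparseCut

section Density

variable {V : Type} [DecidableEq V] {E : Finset (Finset V)} {X Y : Finset V} {ε : ℝ}

theorem eXXY_le_ordCount (hE : (E : Set (Finset V)).Sized 3) (hXY : Disjoint X Y) :
    eXXY E X Y ≤ ordCount E X Y := by
  refine card_le_card_of_surjOn (fun t ↦ {t.1.1, t.1.2, t.2}) fun e he ↦ ?_
  obtain ⟨heE, heX, heY⟩ := mem_filter.1 he
  obtain ⟨a, b, hab, hX⟩ := card_eq_two.1 heX
  obtain ⟨c, hY⟩ := card_eq_one.1 heY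
  have ha : a ∈ e ∧ a ∈ X := mem_inter.1 (by simp [hX])
  have hb : b ∈ e ∧ b ∈ X := mem_inter.1 (by simp [hX])
  have hc : c ∈ e ∧ c ∈ Y := mem_inter.1 (by simp [hY])
  have habc : #({a, b, c} : Finset V) = 3 := card_triple_eq_three.2
    ⟨hab, disjoint_iff_ne.1 hXY a ha.2 c hc.2, disjoint_iff_ne.1 hXY b hb.2 c hc.2⟩
  have heq : {a, b, c} = e :=
    eq_of_subset_of_card_le (by grind) (by rw [hE heE, habc])
  refine ⟨((a, b), c), ?_, heq⟩
  simp only [coe_filter, mem_product, Set.mem_ofPred_eq]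
  exact ⟨⟨⟨ha.2, hb.2⟩, hc.2⟩, by rwa [Adj, heq]⟩

theorem dXXY_le_of_ordCount_le (hE : (E : Set (Finset V)).Sized 3) (hXY : Disjoint X Y)
    (hX : 2 ≤ #X) (hε : 0 ≤ ε) (h : ordCount E X Y ≤ ε / 4 * #X ^ 2 * #Y) : dXXY E X Y ≤ ε := by
  have hle : (eXXY E X Y : ℝ) ≤ ordCount E X Y := by exact_mod_cast eXXY_le_ordCount hE hXY
  have hX' : (0 : ℝ) ≤ #X - 2 := sub_nonneg.2 (by exact_mod_cast hX)
  have hchoose : (#X : ℝ) ^ 2 / 4 ≤ (#X).choose 2 := by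
    rw [Nat.cast_choose_two]
    nlinarith [mul_nonneg (Nat.cast_nonneg (α := ℝ) #X) hX']
  refine div_le_of_le_mul₀ (by positivity) hε ?_
  calc (eXXY E X Y : ℝ) ≤ ε / 4 * #X ^ 2 * #Y := hle.trans h
    _ = ε * ((#X : ℝ) ^ 2 / 4 * #Y) := by ring
    _ ≤ ε * ((#X).choose 2 * #Y) := by gcongr

variable [Fintype V]

theorem choose_mul_card_le_eXXY_add_co (E : Finset (Finset V)) (hXY : Disjoint X Y) :
    (#X).choose 2 * #Y ≤ eXXY E X Y + eXXY (co E) X Y := by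
  have hinter : ∀ t ∈ X.powersetCard 2 ×ˢ Y,
      t.2 ∉ t.1 ∧ insert t.2 t.1 ∩ X = t.1 ∧ insert t.2 t.1 ∩ Y = {t.2} := by
    intro t ht
    rw [mem_product, mem_powersetCard] at ht
    have htX : t.2 ∉ X := disjoint_right.1 hXY ht.2
    refine ⟨fun h ↦ htX (ht.1.1 h), ?_, ?_⟩
    · rw [insert_inter_of_notMem htX, inter_eq_left.2 ht.1.1]
    · rw [insert_inter_of_mem ht.2, disjoint_iff_inter_eq_empty.1 (hXY.mono_left ht.1.1),
        insert_empty_eq]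
  rw [← card_powersetCard, ← card_product]
  refine (card_le_card_of_injOn (t := {e ∈ E | #(e ∩ X) = 2 ∧ #(e ∩ Y) = 1} ∪
    {e ∈ co E | #(e ∩ X) = 2 ∧ #(e ∩ Y) = 1}) (fun t ↦ insert t.2 t.1) ?_ ?_).trans
    (card_union_le _ _)
  · intro t ht
    obtain ⟨hnotMem, hX, hY⟩ := hinter t ht
    have ht2 : #t.1 = 2 := (mem_powersetCard.1 (mem_product.1 ht).1).2
    simp only [coe_union, coe_filter, Set.mem_union, Set.mem_ofPred_eq, hX, hY, ht2,
      card_singleton, co, mem_filter, mem_powersetCard, subset_univ, card_insert_of_notMem hnotMem]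
    tauto
  · intro s hs t ht hst
    obtain ⟨-, hsX, hsY⟩ := hinter s hs
    obtain ⟨-, htX, htY⟩ := hinter t ht
    simp only at hst
    refine Prod.ext (by rw [← hsX, hst, htX]) (singleton_injective ?_)
    rw [← hsY, hst, htY]

theorem one_sub_le_dXXY_of_co (hXY : Disjoint X Y) (hX : 2 ≤ #X) (hY : Y.Nonempty)
    (h : dXXY (co E) X Y ≤ ε) : 1 - ε ≤ dXXY E X Y := by
  have hadd : ((#X).choose 2 : ℝ) * #Y ≤ eXXY E X Y + eXXY (co E) X Y := by
    exact_mod_cast choose_mul_card_le_eXXY_add_co E hXY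
  have hpos : 0 < ((#X).choose 2 : ℝ) * #Y :=
    mul_pos (by exact_mod_cast Nat.choose_pos hX) (by exact_mod_cast hY.card_pos)
  rw [dXXY, div_le_iff₀ hpos] at h
  rw [dXXY, le_div_iff₀ hpos]
  linarith

theorem SparseCut.dXXY_le (h : SparseCut E X Y ε) (hE : (E : Set (Finset V)).Sized 3)
    (hε : 0 ≤ ε) : dXXY E X Y ≤ ε ∧ dXXY E Y X ≤ ε :=
  ⟨dXXY_le_of_ordCount_le hE h.disjoint h.two_le_card_left hε h.ordCount_left_le,
    dXXY_le_of_ordCount_le hE h.disjoint.symm h.two_le_card_right hε h.ordCount_right_le⟩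

theorem SparseCut.epsHomogeneous (h : SparseCut E X Y ε) (hE : (E : Set (Finset V)).Sized 3)
    (hε : 0 ≤ ε) : EpsHomogeneous E X Y ε :=
  Or.inr (h.dXXY_le hE hε)

theorem SparseCut.epsHomogeneous_of_co (h : SparseCut (co E) X Y ε) (hε : 0 ≤ ε) :
    EpsHomogeneous E X Y ε := by
  obtain ⟨hX, hY⟩ := h.dXXY_le (sized_co E) hε
  exact Or.inl
    ⟨one_sub_le_dXXY_of_co h.disjoint h.two_le_card_left h.right_nonempty hX,
    one_sub_le_dXXY_of_co h.disjoint.symm h.two_le_card_right h.left_nonempty hY⟩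

end Density

section SetFamilies

variable {ι α : Type*}

theorem exists_threshold (M : Finset ι) (f : ι → ℕ) {c : ℝ} (hc : 0 ≤ c) (hM : c < #M) :
    ∃ t, c < #{z ∈ M | f z ≤ t} ∧ #{z ∈ M | f z < t} ≤ c := by
  have hex : ∃ t, c < #{z ∈ M | f z ≤ t} :=
    ⟨M.sup f, by rwa [filter_true_of_mem fun z hz ↦ le_sup hz]⟩
  classical
  refine ⟨Nat.find hex, Nat.find_spec hex, ?_⟩
  rcases h : Nat.find hex with _ | t
  · simpa using hc
  · simpa only [Nat.lt_succ_iff, not_lt] using Nat.find_min hex (m := t) (by omega)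

variable [DecidableEq α] {M : Finset ι} {B : ι → Finset α} {N : Finset α} {b s : ℝ}

theorem sq_le_sum_card_sdiff {A : Finset α} {M' : Finset ι} (hA : A ⊆ N) (hM' : M' ⊆ M)
    (hbA : b ≤ #A) (hcard : #M - #M' ≤ 2 * s) (hs : 0 ≤ s) (hsb : 2 * s ≤ b)
    (hN : #{w ∈ N | (#{z ∈ M | w ∉ B z} : ℝ) < b} ≤ s) :
    (b - 2 * s) ^ 2 ≤ ∑ z ∈ M', (#(A \ B z) : ℝ) := by
  classical
  let G := {w ∈ A | b ≤ (#{z ∈ M | w ∉ B z} : ℝ)}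
  have hGcard : b - 2 * s ≤ #G := by
    have hsplit : #A ≤ #G + #{w ∈ N | (#{z ∈ M | w ∉ B z} : ℝ) < b} := by
      rw [← card_filter_add_card_filter_not (s := A) fun w ↦ b ≤ (#{z ∈ M | w ∉ B z} : ℝ)]
      simp only [not_le]
      gcongr
    have : (#A : ℝ) ≤ #G + #{w ∈ N | (#{z ∈ M | w ∉ B z} : ℝ) < b} := by exact_mod_cast hsplit
    linarith
  have hdeg : ∀ w ∈ G, b - 2 * s ≤ (#{z ∈ M' | w ∉ B z} : ℝ) := by
    intro w hw
    have hsplit : #{z ∈ M | w ∉ B z} ≤ #{z ∈ M' | w ∉ B z} + #(M \ M') := by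
      refine le_trans (card_le_card fun z ↦ ?_) (card_union_le _ _)
      simp only [mem_filter, mem_union, mem_sdiff]
      tauto
    have hsdiff : (#(M \ M') : ℝ) = #M - #M' := by rw [cast_card_sdiff hM']
    have : (#{z ∈ M | w ∉ B z} : ℝ) ≤ #{z ∈ M' | w ∉ B z} + #(M \ M') := by exact_mod_cast hsplit
    linarith [(mem_filter.1 hw).2]
  calc (b - 2 * s) ^ 2 ≤ #G * (b - 2 * s) := by
        rw [sq]
        exact mul_le_mul_of_nonneg_right hGcard (sub_nonneg.2 hsb)
    _ = ∑ _w ∈ G, (b - 2 * s) := by rw [sum_const, nsmul_eq_mul]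
    _ ≤ ∑ w ∈ G, (#{z ∈ M' | w ∉ B z} : ℝ) := sum_le_sum hdeg
    _ ≤ ∑ w ∈ A, (#{z ∈ M' | w ∉ B z} : ℝ) :=
      sum_le_sum_of_subset_of_nonneg (filter_subset _ _) fun _ _ _ ↦ Nat.cast_nonneg _
    _ = ∑ z ∈ M', (#(A \ B z) : ℝ) := by
      simp only [← filter_notMem_eq_sdiff]
      exact_mod_cast sum_card_bipartiteAbove_eq_sum_card_bipartiteBelow fun w z ↦ w ∉ B z

theorem pow_four_le_card_mul_sum_sdiff {z : ι} {t : ℕ} (hBz : B z ⊆ N)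
    (hbz : b ≤ #(B z)) (hzt : #(B z) ≤ t) (ht : #{y ∈ M | #(B y) < t} ≤ 2 * s) (hs : 0 ≤ s)
    (hsb : 2 * s ≤ b) (hN : #{w ∈ N | (#{y ∈ M | w ∉ B y} : ℝ) < b} ≤ s) :
    (b - 2 * s) ^ 4 ≤ #M * ∑ y ∈ M, (#(B z \ B y) * #(B y \ B z) : ℝ) := by
  set M' := {y ∈ M | t ≤ #(B y)}
  have hcard : (#M : ℝ) - #M' ≤ 2 * s := by
    have hsplit : #M' + #{y ∈ M | #(B y) < t} = #M := by
      simpa only [not_le] using card_filter_add_card_filter_not (s := M) fun y ↦ t ≤ #(B y)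
    have : (#M' + #{y ∈ M | #(B y) < t} : ℝ) = #M := by exact_mod_cast hsplit
    linarith
  calc (b - 2 * s) ^ 4 = ((b - 2 * s) ^ 2) ^ 2 := by ring
    _ ≤ (∑ y ∈ M', (#(B z \ B y) : ℝ)) ^ 2 := by
      gcongr
      exact sq_le_sum_card_sdiff hBz (filter_subset _ _) hbz hcard hs hsb hN
    _ ≤ #M' * ∑ y ∈ M', (#(B z \ B y) : ℝ) ^ 2 := sq_sum_le_card_mul_sum_sq
    _ ≤ #M' * ∑ y ∈ M', (#(B z \ B y) * #(B y \ B z) : ℝ) := by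
      refine mul_le_mul_of_nonneg_left (sum_le_sum fun y hy ↦ ?_) (Nat.cast_nonneg _)
      rw [sq]
      refine mul_le_mul_of_nonneg_left ?_ (Nat.cast_nonneg _)
      exact_mod_cast card_sdiff_le_card_sdiff_iff.2 (hzt.trans (mem_filter.1 hy).2)
    _ ≤ #M * ∑ y ∈ M, (#(B z \ B y) * #(B y \ B z) : ℝ) := by
      have hM'M : M' ⊆ M := filter_subset _ _
      have hnonneg (y : ι) : (0 : ℝ) ≤ #(B z \ B y) * #(B y \ B z) :=
        mul_nonneg (Nat.cast_nonneg _) (Nat.cast_nonneg _)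
      exact mul_le_mul (by exact_mod_cast card_le_card hM'M)
        (sum_le_sum_of_subset_of_nonneg hM'M fun y _ _ ↦ hnonneg y)
        (sum_nonneg fun y _ ↦ hnonneg y) (Nat.cast_nonneg _)

/-- The sum vanishes when the sets `B z` form a chain. Only the `z` for which most `y` satisfy
`#(B z) ≤ #(B y)` are used: for these `#(B z \ B y) ≤ #(B y \ B z)`, so it suffices to bound
`∑ y, #(B z \ B y)` from below. -/
theorem mul_pow_four_le_card_mul_sum_sdiff (hBN : ∀ z ∈ M, B z ⊆ N)
    (hs : 0 ≤ s) (hsb : 2 * s ≤ b) (hM : 2 * s < #M) (hsmall : #{z ∈ M | (#(B z) : ℝ) < b} ≤ s)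
    (hN : #{w ∈ N | (#{z ∈ M | w ∉ B z} : ℝ) < b} ≤ s) :
    s * (b - 2 * s) ^ 4 ≤ #M * ∑ z ∈ M, ∑ y ∈ M, (#(B z \ B y) * #(B y \ B z) : ℝ) := by
  obtain ⟨t, htM, ht⟩ := exists_threshold M (fun z ↦ #(B z)) (by positivity) hM
  set Z := {z ∈ M | b ≤ #(B z) ∧ #(B z) ≤ t} with hZ
  have hZcard : s ≤ #Z := by
    classical
    have hsplit : #{z ∈ M | #(B z) ≤ t} ≤ #Z + #{z ∈ M | (#(B z) : ℝ) < b} := by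
      refine le_trans (card_le_card fun z ↦ ?_) (card_union_le _ _)
      simp only [hZ, mem_filter, mem_union, ← not_le]
      tauto
    have : (#{z ∈ M | #(B z) ≤ t} : ℝ) ≤ #Z + #{z ∈ M | (#(B z) : ℝ) < b} := by
      exact_mod_cast hsplit
    linarith
  have hZsum : ∀ z ∈ Z, (b - 2 * s) ^ 4 ≤ #M * ∑ y ∈ M, (#(B z \ B y) * #(B y \ B z) : ℝ) := by
    intro z hz
    obtain ⟨hzM, hbz, hzt⟩ := mem_filter.1 hz
    exact pow_four_le_card_mul_sum_sdiff (hBN z hzM) hbz hzt ht hs hsb hN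
  calc s * (b - 2 * s) ^ 4 ≤ #Z * (b - 2 * s) ^ 4 := by gcongr
    _ = ∑ _z ∈ Z, (b - 2 * s) ^ 4 := by rw [sum_const, nsmul_eq_mul]
    _ ≤ ∑ z ∈ Z, #M * ∑ y ∈ M, (#(B z \ B y) * #(B y \ B z) : ℝ) := sum_le_sum hZsum
    _ ≤ ∑ z ∈ M, #M * ∑ y ∈ M, (#(B z \ B y) * #(B y \ B z) : ℝ) :=
      sum_le_sum_of_subset_of_nonneg (filter_subset _ _) fun _ _ _ ↦ mul_nonneg (Nat.cast_nonneg _)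
        (sum_nonneg fun _ _ ↦ mul_nonneg (Nat.cast_nonneg _) (Nat.cast_nonneg _))
    _ = #M * ∑ z ∈ M, ∑ y ∈ M, (#(B z \ B y) * #(B y \ B z) : ℝ) := (mul_sum _ _ _).symm

end SetFamilies

section Dichotomy

variable {V : Type*} [Fintype V] [DecidableEq V] {E : Finset (Finset V)} {u v w y z : V}

/-- The vertices completing both `u`, `v` and `u`, `z` to an edge. -/
def commonNbhd (E : Finset (Finset V)) (u v z : V) : Finset V := nbhd E u v ∩ nbhd E u z

@[simp] theorem mem_commonNbhd : w ∈ commonNbhd E u v z ↔ Adj E u v w ∧ Adj E u z w := by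
  simp [commonNbhd]

open Classical in
/-- The vertices `z` which form a non-edge with `u`, `v` and for which `u`, `v` and `u`, `z` have
fewer than `b` common neighbours. -/
noncomputable def light (E : Finset (Finset V)) (u v : V) (b : ℝ) : Finset V :=
  {z ∈ nbhd (co E) u v | #(commonNbhd E u v z) < b}

theorem mem_light {b : ℝ} :
    z ∈ light E u v b ↔ Adj (co E) u v z ∧ #(commonNbhd E u v z) < b := by
  simp [light]

theorem card_mul_sum_sdiff_le_card_dirty (hE : (E : Set (Finset V)).Sized 3) (u v : V) :
    Fintype.card V * ∑ z ∈ nbhd (co E) u v, ∑ y ∈ nbhd (co E) u v,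
      #(commonNbhd E u v z \ commonNbhd E u v y) * #(commonNbhd E u v y \ commonNbhd E u v z) ≤
      #(dirty E u v) := by
  set M := nbhd (co E) u v with hM
  set B := commonNbhd E u v with hB
  calc Fintype.card V * ∑ z ∈ M, ∑ y ∈ M, #(B z \ B y) * #(B y \ B z)
      = #((univ : Finset V) ×ˢ (M ×ˢ M).sigma fun p ↦ (B p.1 \ B p.2) ×ˢ (B p.2 \ B p.1)) := by
        simp only [card_product, card_sigma, sum_product, card_univ]
    _ ≤ #(dirty E u v) := card_le_card_of_injOn
        (fun t ↦ (t.2.2.1, t.2.2.2, t.2.1.1, t.2.1.2, t.1)) ?_ ?_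
  · rintro ⟨e, ⟨z, y⟩, w, x⟩ ht
    simp only [coe_product, coe_univ, coe_sigma, Set.mem_prod, Set.mem_univ, true_and,
      Set.mem_sigma_iff, mem_coe, hM, hB, mem_nbhd, mem_sdiff, mem_commonNbhd] at ht
    obtain ⟨⟨hz, hy⟩, ⟨⟨hw, hzw⟩, hyw⟩, ⟨hx, hyx⟩, hzx⟩ := ht
    refine mem_dirty.2 fun hS ↦ ?_
    refine not_d2Free_of_induced_matching hE hw hx hz hy (adj_swap_right.1 hzw) ?_ ?_
      (adj_swap_right.1 hyx) (hS.mono (by grind))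
    · exact fun h ↦ hyw ⟨hw, adj_swap_right.1 h⟩
    · exact fun h ↦ hzx ⟨hx, adj_swap_right.1 h⟩
  · rintro ⟨e, ⟨z, y⟩, w, x⟩ _ ⟨e', ⟨z', y'⟩, w', x'⟩ _ h
    simp_all

theorem commonNbhd_co (hE : (E : Set (Finset V)).Sized 3) (hw : w ∈ nbhd E u v) :
    commonNbhd (co E) u v w = {z ∈ nbhd (co E) u v | w ∉ commonNbhd E u v z} := by
  have hw := mem_nbhd.1 hw
  ext z
  have := adj_swap_right (E := E) (a := u) (b := z) (c := w)
  have := hw.ne hE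
  simp only [mem_commonNbhd, mem_filter, mem_nbhd, hw, true_and, adj_co]
  grind

theorem lt_card_light_or_lt_card_light_co (hE : (E : Set (Finset V)).Sized 3) {b s : ℝ}
    (hs : 0 ≤ s) (hsb : 2 * s ≤ b) (hM : 2 * s < #(nbhd (co E) u v))
    (hdirty : #(dirty E u v) < s * (b - 2 * s) ^ 4) :
    s < #(light E u v b) ∨ s < #(light (co E) u v b) := by
  by_contra! h
  obtain ⟨hlight, hlight_co⟩ := h
  have hlight_co_eq : light (co E) u v b =
      {w ∈ nbhd E u v | (#{z ∈ nbhd (co E) u v | w ∉ commonNbhd E u v z} : ℝ) < b} := by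
    rw [light, co_co hE]
    exact filter_congr fun w hw ↦ by rw [commonNbhd_co hE hw]
  have hchain := mul_pow_four_le_card_mul_sum_sdiff (B := commonNbhd E u v)
    (fun z _ ↦ inter_subset_left) hs hsb hM hlight (hlight_co_eq ▸ hlight_co)
  have hcount : (Fintype.card V : ℝ) * ∑ z ∈ nbhd (co E) u v, ∑ y ∈ nbhd (co E) u v,
      (#(commonNbhd E u v z \ commonNbhd E u v y) : ℝ) *
        #(commonNbhd E u v y \ commonNbhd E u v z) ≤ #(dirty E u v) := by
    exact_mod_cast card_mul_sum_sdiff_le_card_dirty hE u v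
  refine hdirty.not_ge (hchain.trans (le_trans ?_ hcount))
  refine mul_le_mul_of_nonneg_right (Nat.cast_le.2 (card_le_univ _)) ?_
  exact sum_nonneg fun _ _ ↦ sum_nonneg fun _ _ ↦
    mul_nonneg (Nat.cast_nonneg _) (Nat.cast_nonneg _)

end Dichotomy

section LightVertices

theorem exists_card_filter_Ico_le {ι : Type*} (M : Finset ι) (f : ι → ℝ) {g : ℕ → ℝ}
    (hg : Monotone g) {s : ℕ} (hs : 0 < s) :
    ∃ i < s, s * #{z ∈ M | f z ∈ Set.Ico (g i) (g (i + 1))} ≤ #M := by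
  classical
  have hdisj : ((range s : Finset ℕ) : Set ℕ).PairwiseDisjoint
      fun i ↦ {z ∈ M | f z ∈ Set.Ico (g i) (g (i + 1))} := fun i _ j _ hij ↦
    disjoint_filter.2 fun z _ hi hj ↦
      Set.disjoint_left.1 (hg.pairwise_disjoint_on_Ico_succ hij) hi hj
  have hsum : ∑ i ∈ range s, #{z ∈ M | f z ∈ Set.Ico (g i) (g (i + 1))} ≤ #M := by
    rw [← card_biUnion hdisj]
    exact card_le_card (biUnion_subset.2 fun i _ ↦ filter_subset _ _)
  obtain ⟨i, hi, h⟩ := exists_le_of_sum_le (nonempty_range_iff.2 hs.ne')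
    (f := fun i ↦ s * #{z ∈ M | f z ∈ Set.Ico (g i) (g (i + 1))}) (g := fun _ ↦ #M) (by
      rw [← mul_sum, sum_const, card_range, smul_eq_mul]
      gcongr)
  exact ⟨i, mem_range.1 hi, h⟩

theorem card_filter_product_self_le {α : Type*} [Fintype α] [DecidableEq α] (K H : Finset α)
    (P : α × α → Prop) [DecidablePred P] :
    #{p ∈ K ×ˢ K | P p} ≤ #{p ∈ H ×ˢ H | P p} + 2 * (Fintype.card α * #(K \ H)) := by
  have hsub : {p ∈ K ×ˢ K | P p} ⊆
      {p ∈ H ×ˢ H | P p} ∪ ((K \ H) ×ˢ univ ∪ univ ×ˢ (K \ H)) := by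
    rintro ⟨k, l⟩
    simp only [mem_filter, mem_union, mem_product, mem_sdiff, mem_univ]
    tauto
  refine (card_le_card hsub).trans ((card_union_le _ _).trans
    (Nat.add_le_add_left ((card_union_le _ _).trans_eq ?_) _))
  rw [card_product, card_product, card_univ]
  ring

variable {V : Type*} [DecidableEq V] {E : Finset (Finset V)}

theorem ordCount_sq_le (E : Finset (Finset V)) (X Y : Finset V) :
    ordCount E X Y ^ 2 ≤ #X ^ 2 * ∑ p ∈ X ×ˢ X, #{y ∈ Y | Adj E p.1 p.2 y} ^ 2 := by
  rw [ordCount_eq_sum, sq #X, ← card_product]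
  exact sq_sum_le_card_mul_sum_sq

variable [Fintype V] {u v k l r w x : V} {a b c : ℝ}

open Classical in
theorem card_filter_adj_sq_le (hE : (E : Set (Finset V)).Sized 3) (K : Finset V) (r s : V) :
    #{k ∈ K | Adj E r s k} ^ 2 ≤ Fintype.card V + #{q ∈ K ×ˢ K | Adj E q.1 q.2 r} +
      #{q ∈ K ×ˢ K | Adj E q.1 q.2 s} + #{q : V × V | ¬D2Free E {r, s, q.1, q.2}} := by
  have hsub : {k ∈ K | Adj E r s k} ×ˢ {k ∈ K | Adj E r s k} ⊆
      univ.diag ∪ {q ∈ K ×ˢ K | Adj E q.1 q.2 r} ∪ {q ∈ K ×ˢ K | Adj E q.1 q.2 s} ∪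
        ({q | ¬D2Free E {r, s, q.1, q.2}} : Finset (V × V)) := by
    rintro ⟨k, l⟩ h
    simp only [mem_product, mem_filter] at h
    obtain ⟨⟨hk, hrk⟩, hl, hrl⟩ := h
    simp only [mem_union, mem_diag, mem_filter, mem_product, mem_univ, true_and, hk, hl]
    by_contra! hcon
    obtain ⟨⟨⟨hkl, hklr⟩, hkls⟩, hS⟩ := hcon
    have hr := hrk.ne hE
    have hs := hrl.ne hE
    have hrkl : ¬Adj E r k l := fun h ↦ hklr (adj_swap_right.1 (adj_swap_left.1 h))
    have hskl : ¬Adj E s k l := fun h ↦ hkls (adj_swap_right.1 (adj_swap_left.1 h))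
    refine hS.sum_adj_ne_two hE subset_rfl (by simp; tauto) ?_
    simp [hrk, hrl, hrkl, hskl]
  rw [sq, ← card_product]
  refine (card_le_card hsub).trans ((card_union_le _ _).trans ?_)
  gcongr
  refine (card_union_le _ _).trans ?_
  gcongr
  refine (card_union_le _ _).trans_eq ?_
  rw [diag_card, card_univ]

open Classical in
theorem card_mul_sum_not_d2Free_le (E : Finset (Finset V)) (u v : V) :
    Fintype.card V * ∑ p : V × V, #{q : V × V | ¬D2Free E {p.1, p.2, q.1, q.2}} ≤
      #(dirty E u v) := by
  rw [← card_sigma, ← card_univ, ← card_product]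
  refine card_le_card_of_injOn (fun t ↦ (t.2.1.1, t.2.1.2, t.2.2.1, t.2.2.2, t.1)) ?_ ?_
  · rintro ⟨e, ⟨a, b⟩, c, d⟩ h
    have hS : ¬D2Free E {a, b, c, d} := by simpa using h
    exact mem_dirty.2 fun hT ↦ hS (hT.mono (by grind))
  · rintro ⟨e, ⟨a, b⟩, c, d⟩ _ ⟨e', ⟨a', b'⟩, c', d'⟩ _ h
    simp_all

theorem card_mul_sum_sq_le (hE : (E : Set (Finset V)).Sized 3) (R K : Finset V) (u v : V) :
    Fintype.card V * ∑ p ∈ R ×ˢ R, #{k ∈ K | Adj E p.1 p.2 k} ^ 2 ≤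
      Fintype.card V ^ 4 + Fintype.card V * (2 * (#R * ordCount E K R)) + #(dirty E u v) := by
  classical
  have hR : #R * #R * Fintype.card V ≤ Fintype.card V ^ 3 := by
    rw [pow_succ, sq]
    gcongr <;> exact card_le_univ R
  have hapex : ∑ p ∈ R ×ˢ R, #{q ∈ K ×ˢ K | Adj E q.1 q.2 p.1} = #R * ordCount E K R := by
    simp_rw [ordCount_eq_sum_apex, sum_product, sum_const, smul_eq_mul, mul_sum]
  have hapex' : ∑ p ∈ R ×ˢ R, #{q ∈ K ×ˢ K | Adj E q.1 q.2 p.2} = #R * ordCount E K R := by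
    simp_rw [ordCount_eq_sum_apex, sum_product, sum_const, smul_eq_mul]
  have hsum : ∑ p ∈ R ×ˢ R, #{k ∈ K | Adj E p.1 p.2 k} ^ 2 ≤ Fintype.card V ^ 3 +
      2 * (#R * ordCount E K R) + ∑ p : V × V, #{q : V × V | ¬D2Free E {p.1, p.2, q.1, q.2}} := by
    refine (sum_le_sum fun p _ ↦ card_filter_adj_sq_le hE K p.1 p.2).trans ?_
    rw [sum_add_distrib, sum_add_distrib, sum_add_distrib, sum_const, card_product, smul_eq_mul,
      hapex, hapex', two_mul, ← add_assoc]
    gcongr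
    exact subset_univ _
  calc Fintype.card V * ∑ p ∈ R ×ˢ R, #{k ∈ K | Adj E p.1 p.2 k} ^ 2
      ≤ Fintype.card V * (Fintype.card V ^ 3 + 2 * (#R * ordCount E K R) +
          ∑ p : V × V, #{q : V × V | ¬D2Free E {p.1, p.2, q.1, q.2}}) := by gcongr
    _ = Fintype.card V ^ 4 + Fintype.card V * (2 * (#R * ordCount E K R)) +
          Fintype.card V * ∑ p : V × V, #{q : V × V | ¬D2Free E {p.1, p.2, q.1, q.2}} := by ring
    _ ≤ _ := by
      gcongr
      exact card_mul_sum_not_d2Free_le E u v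

open Classical in
/-- The vertices other than `u`, `v` that are not in `light E u v b`. -/
noncomputable def heavy (E : Finset (Finset V)) (u v : V) (b : ℝ) : Finset V :=
  nbhd E u v ∪ {z ∈ nbhd (co E) u v | b ≤ #(commonNbhd E u v z)}

theorem mem_heavy :
    k ∈ heavy E u v b ↔ Adj E u v k ∨ Adj (co E) u v k ∧ b ≤ #(commonNbhd E u v k) := by
  simp [heavy]

/-- The vertices `w` which, together with `u`, `v`, tell a heavy vertex `k` apart from a light
vertex `r`; if `u`, `v`, `k` is already an edge, every `w` does. -/
def separators (E : Finset (Finset V)) (u v k r : V) : Finset V :=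
  if Adj E u v k then univ else commonNbhd E u v k \ commonNbhd E u v r

theorem le_card_separators (hc : c ≤ Fintype.card V) (hab : a + c ≤ b) (hk : k ∈ heavy E u v b)
    (hr : r ∈ light E u v a) : c ≤ #(separators E u v k r) := by
  unfold separators
  split_ifs with h
  · rwa [card_univ]
  · have hkb := ((mem_heavy.1 hk).resolve_left h).2
    have hra := (mem_light.1 hr).2
    have hcard : (#(commonNbhd E u v k) : ℝ) ≤
        #(commonNbhd E u v r) + #(commonNbhd E u v k \ commonNbhd E u v r) := by
      exact_mod_cast card_le_card_sdiff_add_card.trans_eq (add_comm _ _)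
    linarith

/-- The link of `r` on the heavy vertices that form no edge with `u` and `r`. -/
noncomputable def heavyLink (E : Finset (Finset V)) (u v : V) (b : ℝ) (r : V) : Finset (V × V) :=
  {p ∈ (heavy E u v b \ commonNbhd E u v r) ×ˢ (heavy E u v b \ commonNbhd E u v r) |
    Adj E p.1 p.2 r}

theorem not_d2Free_of_mem_heavyLink (hE : (E : Set (Finset V)).Sized 3) (hr : r ∈ light E u v a)
    (hkl : (k, l) ∈ heavyLink E u v b r) (hw : w ∈ separators E u v k r)
    (hx : x ∈ separators E u v l r) : ¬D2Free E {u, v, k, l, r, w, x} := by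
  simp only [heavyLink, mem_filter, mem_product, mem_sdiff, mem_heavy] at hkl
  obtain ⟨⟨⟨hk, hkr⟩, hl, hlr⟩, hklr⟩ := hkl
  obtain ⟨hr, -⟩ := mem_light.1 hr
  intro hS
  have hsub {S : Finset V} (h : S ⊆ {u, v, k, l, r, w, x}) : D2Free E S := hS.mono h
  have hnot {y : V} (hy : Adj E u v y) (hyr : y ∉ commonNbhd E u v r) : ¬Adj E u y r :=
    fun h ↦ hyr (mem_commonNbhd.2 ⟨hy, adj_swap_right.1 h⟩)
  have hsep {y z : V} (hz : ¬Adj E u v z) (hy : y ∈ separators E u v z r) :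
      Adj E u v y ∧ Adj E u y z ∧ ¬Adj E u y r := by
    rw [separators, if_neg hz, mem_sdiff] at hy
    obtain ⟨huy, hyz⟩ := mem_commonNbhd.1 hy.1
    exact ⟨huy, adj_swap_right.1 hyz, hnot huy hy.2⟩
  by_cases hk' : Adj E u v k <;> by_cases hl' : Adj E u v l
  · exact not_d2Free_of_adj_nbhd_nbhd hE hk' hl' hr (hnot hk' hkr) (hnot hl' hlr) hklr
      (hsub (by grind))
  · obtain ⟨hx, hxl, hxr⟩ := hsep hl' hx
    exact not_d2Free_of_adj_nbhd_conbhd hE hk' hx (hl.resolve_left hl').1 hr (hnot hk' hkr) hxl hxr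
      hklr (hsub (by grind))
  · obtain ⟨hw, hwk, hwr⟩ := hsep hk' hw
    exact not_d2Free_of_adj_nbhd_conbhd hE hl' hw (hk.resolve_left hk').1 hr (hnot hl' hlr) hwk hwr
      (adj_swap_left.1 hklr) (hsub (by grind))
  · obtain ⟨hw, hwk, hwr⟩ := hsep hk' hw
    obtain ⟨hx, hxl, hxr⟩ := hsep hl' hx
    have hk := (hk.resolve_left hk').1
    have hl := (hl.resolve_left hl').1
    by_cases hwl : Adj E u w l
    · exact not_d2Free_of_adj_conbhd_conbhd hE hw hk hl hr hwk hwl hwr hklr (hsub (by grind))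
    by_cases hxk : Adj E u x k
    · exact not_d2Free_of_adj_conbhd_conbhd hE hx hk hl hr hxk hxl hxr hklr (hsub (by grind))
    · exact not_d2Free_of_induced_matching hE hw hx hk hl hwk hwl hxk hxl (hsub (by grind))

theorem sq_mul_sum_card_heavyLink_le (hE : (E : Set (Finset V)).Sized 3) (hc₀ : 0 ≤ c)
    (hc : c ≤ Fintype.card V) (hab : a + c ≤ b) :
    c ^ 2 * ∑ r ∈ light E u v a, (#(heavyLink E u v b r) : ℝ) ≤ #(dirty E u v) := by
  have hcount : ∑ r ∈ light E u v a, ∑ p ∈ heavyLink E u v b r,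
      #(separators E u v p.1 r) * #(separators E u v p.2 r) ≤ #(dirty E u v) := by
    simp_rw [← card_product]
    rw [sum_sigma', ← card_sigma]
    refine card_le_card_of_injOn (fun t ↦ (t.1.2.1, t.1.2.2, t.1.1, t.2.1, t.2.2)) ?_ ?_
    · rintro ⟨⟨r, k, l⟩, w, x⟩ ht
      simp only [coe_sigma, Set.mem_sigma_iff, mem_coe, mem_product] at ht
      exact mem_dirty.2 (not_d2Free_of_mem_heavyLink hE ht.1.1 ht.1.2 ht.2.1 ht.2.2)
    · rintro ⟨⟨r, k, l⟩, w, x⟩ _ ⟨⟨r', k', l'⟩, w', x'⟩ _ h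
      simp_all
  refine le_trans ?_ (Nat.cast_le.2 hcount)
  push_cast
  rw [mul_sum]
  refine sum_le_sum fun r hr ↦ ?_
  rw [mul_comm, ← nsmul_eq_mul]
  refine card_nsmul_le_sum _ _ _ fun p hp ↦ ?_
  obtain ⟨hk, hl⟩ := mem_product.1 (mem_filter.1 hp).1
  have hk := le_card_separators hc hab (mem_sdiff.1 hk).1 hr
  have hl := le_card_separators hc hab (mem_sdiff.1 hl).1 hr
  rw [sq]
  exact mul_le_mul hk hl hc₀ (Nat.cast_nonneg _)

theorem ordCount_compl_light_le (E : Finset (Finset V)) (u v : V) (a b : ℝ) :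
    (ordCount E (univ \ light E u v a) (light E u v a) : ℝ) ≤
      ∑ r ∈ light E u v a, (#(heavyLink E u v b r) : ℝ) + 2 * (Fintype.card V *
        (#(light E u v b \ light E u v a) + 2 + a) * #(light E u v a)) := by
  set K := univ \ light E u v a with hK
  set Q := light E u v b \ light E u v a with hQ
  have hfiber : ∀ r ∈ light E u v a, (#{p ∈ K ×ˢ K | Adj E p.1 p.2 r} : ℝ) ≤
      #(heavyLink E u v b r) + 2 * (Fintype.card V * (#Q + 2 + a)) := by
    intro r hr
    obtain ⟨hr, hra⟩ := mem_light.1 hr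
    have huv : u ≠ v := (hr.ne (sized_co E)).1
    have hsub : K \ (heavy E u v b \ commonNbhd E u v r) ⊆ Q ∪ {u, v} ∪ commonNbhd E u v r := by
      intro z hz
      simp only [hK, hQ, mem_sdiff, mem_univ, true_and, mem_heavy, mem_light, mem_union,
        mem_insert, mem_singleton, adj_co] at hz ⊢
      grind
    have hcard : #(K \ (heavy E u v b \ commonNbhd E u v r)) ≤ #Q + 2 + #(commonNbhd E u v r) := by
      refine (card_le_card hsub).trans ((card_union_le _ _).trans ?_)
      gcongr
      exact (card_union_le _ _).trans_eq (by rw [card_pair huv])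
    have hlink := card_filter_product_self_le K (heavy E u v b \ commonNbhd E u v r)
      fun p ↦ Adj E p.1 p.2 r
    calc (#{p ∈ K ×ˢ K | Adj E p.1 p.2 r} : ℝ)
        ≤ #(heavyLink E u v b r) +
            2 * (Fintype.card V * (#Q + 2 + #(commonNbhd E u v r) : ℕ)) := by
          exact_mod_cast hlink.trans (by rw [heavyLink]; gcongr)
      _ ≤ _ := by
          push_cast
          gcongr
  rw [ordCount_eq_sum_apex]
  push_cast
  refine (sum_le_sum hfiber).trans_eq ?_
  rw [sum_add_distrib, sum_const, nsmul_eq_mul]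
  ring

theorem two_le_pow_eight_mul {x n : ℝ} (hx : 0 < x) (hx1 : x ≤ 1 / 100) (hn : 1 ≤ n * x ^ 60) :
    2 ≤ x ^ 8 * n := by
  have hn0 : 0 < n := pos_of_mul_pos_left (one_pos.trans_le hn) (by positivity)
  have hx52 : x ^ 52 ≤ 1 / 2 := (pow_le_of_le_one hx.le (by linarith) (by norm_num)).trans
    (by linarith)
  have hpos : 0 ≤ x ^ 8 * n := by positivity
  nlinarith [mul_le_mul_of_nonneg_left hx52 hpos]

theorem ordCount_compl_light_le_pow (hE : (E : Set (Finset V)).Sized 3) {x : ℝ} (hx : 0 < x)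
    (hx1 : x ≤ 1 / 100) (hn : 1 ≤ Fintype.card V * x ^ 60)
    (hdirty : #(dirty E u v) ≤ x ^ 45 * Fintype.card V ^ 5)
    (ha : a ≤ 2 * x ^ 7 * Fintype.card V) (hab : a + x ^ 15 * Fintype.card V ≤ b)
    (hwindow : #(light E u v b \ light E u v a) ≤ x ^ 7 * Fintype.card V)
    (hlight : x ^ 8 * Fintype.card V ≤ #(light E u v a)) :
    ordCount E (univ \ light E u v a) (light E u v a) ≤
      9 * x ^ 7 * Fintype.card V ^ 2 * #(light E u v a) := by
  have hcount := ordCount_compl_light_le E u v a b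
  have hx15 : x ^ 15 ≤ 1 := pow_le_one₀ hx.le (by linarith)
  have hlinks := sq_mul_sum_card_heavyLink_le (u := u) (v := v) hE (by positivity)
    (mul_le_of_le_one_left (Nat.cast_nonneg _) hx15) hab
  set n : ℝ := (Fintype.card V : ℝ)
  set y : ℝ := (#(light E u v a) : ℝ)
  set q : ℝ := (#(light E u v b \ light E u v a) : ℝ)
  set G : ℝ := ∑ r ∈ light E u v a, (#(heavyLink E u v b r) : ℝ)
  have hn0 : 0 < n := pos_of_mul_pos_left (one_pos.trans_le hn) (by positivity)
  have hy0 : 0 < y := lt_of_lt_of_le (by positivity) hlight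
  have hG : G ≤ x ^ 7 * n ^ 2 * y := by
    have hG' : (x ^ 15 * n) ^ 2 * G ≤ (x ^ 15 * n) ^ 2 * (x ^ 15 * n ^ 3) :=
      (hlinks.trans hdirty).trans_eq (by ring)
    calc G ≤ x ^ 15 * n ^ 3 := le_of_mul_le_mul_left hG' (by positivity)
      _ = x ^ 7 * n ^ 2 * (x ^ 8 * n) := by ring
      _ ≤ x ^ 7 * n ^ 2 * y := by gcongr
  have htwo : 2 ≤ x ^ 7 * n := (two_le_pow_eight_mul hx hx1 hn).trans <| by
    gcongr ?_ * n
    exact pow_le_pow_of_le_one hx.le (by linarith) (by norm_num)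
  have hexc : n * (q + 2 + a) * y ≤ n * (4 * x ^ 7 * n) * y := by
    gcongr
    linarith
  linarith

/-- By Cauchy–Schwarz it is enough to count `r, s ∈ R` and `k, l ∈ K` such that `r s k` and `r s l`
are edges; unless `r, s, k, l` span an induced `D₂`, one of `k l r` and `k l s` is then an edge. -/
theorem ordCount_le_of_ordCount_swap_le (hE : (E : Set (Finset V)).Sized 3) {K R : Finset V} {x : ℝ}
    (hx : 0 < x) (hx1 : x ≤ 1 / 100) (hn : 1 ≤ Fintype.card V * x ^ 60)
    (hdirty : #(dirty E u v) ≤ x ^ 45 * Fintype.card V ^ 5)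
    (hK : x ^ 2 * Fintype.card V ≤ #K) (hR : x ^ 8 * Fintype.card V ≤ #R)
    (hKR : ordCount E K R ≤ 9 * x ^ 3 * #K ^ 2 * #R) :
    ordCount E R K ≤ 25 * x * #R ^ 2 * #K := by
  have hcauchy : (ordCount E R K : ℝ) ^ 2 ≤
      #R ^ 2 * ∑ p ∈ R ×ˢ R, (#{k ∈ K | Adj E p.1 p.2 k} : ℝ) ^ 2 := by
    exact_mod_cast ordCount_sq_le E R K
  have hquad : Fintype.card V * ∑ p ∈ R ×ˢ R, (#{k ∈ K | Adj E p.1 p.2 k} : ℝ) ^ 2 ≤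
      (Fintype.card V : ℝ) ^ 4 + Fintype.card V * (2 * (#R * ordCount E K R)) +
        #(dirty E u v) := by
    exact_mod_cast card_mul_sum_sq_le hE R K u v
  set n : ℝ := (Fintype.card V : ℝ)
  set m : ℝ := (#K : ℝ)
  set y : ℝ := (#R : ℝ)
  set S : ℝ := ∑ p ∈ R ×ˢ R, (#{k ∈ K | Adj E p.1 p.2 k} : ℝ) ^ 2
  have hn0 : 0 < n := pos_of_mul_pos_left (one_pos.trans_le hn) (by positivity)
  have hpow {i : ℕ} (hi : 2 ≤ i) : x ^ i ≤ x ^ 2 :=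
    pow_le_pow_of_le_one hx.le (by linarith) hi
  have hym : x ^ 20 * n ^ 4 ≤ y ^ 2 * m ^ 2 := by
    calc x ^ 20 * n ^ 4 = (x ^ 8 * n) ^ 2 * (x ^ 2 * n) ^ 2 := by ring
      _ ≤ y ^ 2 * m ^ 2 := by gcongr
  have hdiag : n ^ 4 ≤ n * (x ^ 2 * (y ^ 2 * m ^ 2)) := by
    calc n ^ 4 ≤ n ^ 4 * (n * x ^ 60) := le_mul_of_one_le_right (by positivity) hn
      _ = n * (x ^ 40 * (x ^ 20 * n ^ 4)) := by ring
      _ ≤ n * (x ^ 2 * (y ^ 2 * m ^ 2)) := by gcongr ?_ * (?_ * ?_); exact hpow (by norm_num)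
  have hT : (#(dirty E u v) : ℝ) ≤ n * (x ^ 2 * (y ^ 2 * m ^ 2)) := by
    calc (#(dirty E u v) : ℝ) ≤ n * (x ^ 25 * (x ^ 20 * n ^ 4)) := hdirty.trans_eq (by ring)
      _ ≤ n * (x ^ 2 * (y ^ 2 * m ^ 2)) := by gcongr ?_ * (?_ * ?_); exact hpow (by norm_num)
  have hapex : y * ordCount E K R ≤ 9 * (x ^ 2 * (y ^ 2 * m ^ 2)) := by
    calc y * ordCount E K R ≤ y * (9 * x ^ 3 * m ^ 2 * y) := by gcongr
      _ = 9 * (x ^ 3 * (y ^ 2 * m ^ 2)) := by ring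
      _ ≤ 9 * (x ^ 2 * (y ^ 2 * m ^ 2)) := by gcongr ?_ * (?_ * _); exact hpow (by norm_num)
  have hS : S ≤ 20 * (x ^ 2 * (y ^ 2 * m ^ 2)) := by
    refine le_of_mul_le_mul_left ?_ hn0
    linarith [mul_le_mul_of_nonneg_left hapex hn0.le]
  refine le_of_sq_le_sq ?_ (by positivity)
  calc (ordCount E R K : ℝ) ^ 2 ≤ y ^ 2 * (20 * (x ^ 2 * (y ^ 2 * m ^ 2))) :=
        hcauchy.trans (by gcongr)
    _ = 20 * (x * y ^ 2 * m) ^ 2 := by ring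
    _ ≤ 625 * (x * y ^ 2 * m) ^ 2 := by gcongr; norm_num
    _ = (25 * x * y ^ 2 * m) ^ 2 := by ring

/-- Pigeonhole over `⌈1 / x ^ 7⌉` disjoint windows of width `x ^ 15 * n` above `x ^ 7 * n`. -/
theorem exists_sparse_window (E : Finset (Finset V)) (u v : V) {x : ℝ} (hx : 0 < x)
    (hx1 : x ≤ 1 / 2) : ∃ a, x ^ 7 * Fintype.card V ≤ a ∧ a ≤ 2 * x ^ 7 * Fintype.card V ∧
      #(light E u v (a + x ^ 15 * Fintype.card V) \ light E u v a) ≤ x ^ 7 * Fintype.card V := by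
  set n : ℝ := (Fintype.card V : ℝ)
  have hn : 0 ≤ n := Nat.cast_nonneg _
  have hs : (⌈1 / x ^ 7⌉₊ : ℝ) < 1 / x ^ 7 + 1 := Nat.ceil_lt_add_one (by positivity)
  have hmono : Monotone fun i : ℕ ↦ x ^ 7 * n + i * (x ^ 15 * n) := by
    intro i j hij
    dsimp only
    gcongr
  obtain ⟨i, hi, hcard⟩ := exists_card_filter_Ico_le (nbhd (co E) u v)
    (fun z ↦ #(commonNbhd E u v z)) hmono (Nat.ceil_pos.2 (by positivity : 0 < 1 / x ^ 7))
  refine ⟨x ^ 7 * n + i * (x ^ 15 * n), le_add_of_nonneg_right (by positivity), ?_, ?_⟩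
  · have his : (i : ℝ) * x ^ 15 ≤ x ^ 7 := by
      calc (i : ℝ) * x ^ 15 ≤ (1 / x ^ 7 + 1) * x ^ 15 := by
            gcongr
            exact (Nat.cast_le.2 hi.le).trans hs.le
        _ = x ^ 7 * (x * (1 + x ^ 7)) := by field_simp
        _ ≤ x ^ 7 * (1 / 2 * (1 + 1)) := by
            gcongr
            exact pow_le_one₀ hx.le (by linarith)
        _ = x ^ 7 := by norm_num
    nlinarith
  · have heq : light E u v (x ^ 7 * n + i * (x ^ 15 * n) + x ^ 15 * n) \
        light E u v (x ^ 7 * n + i * (x ^ 15 * n)) = {z ∈ nbhd (co E) u v |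
          (#(commonNbhd E u v z) : ℝ) ∈ Set.Ico (x ^ 7 * n + i * (x ^ 15 * n))
            (x ^ 7 * n + (i + 1 : ℕ) * (x ^ 15 * n))} := by
      ext z
      rw [mem_sdiff, mem_light, mem_light, mem_filter, mem_nbhd, Set.mem_Ico]
      push_cast
      grind
    rw [heq]
    have hle : (⌈1 / x ^ 7⌉₊ : ℝ) * #{z ∈ nbhd (co E) u v |
        (#(commonNbhd E u v z) : ℝ) ∈ Set.Ico (x ^ 7 * n + i * (x ^ 15 * n))
          (x ^ 7 * n + (i + 1 : ℕ) * (x ^ 15 * n))} ≤ (Fintype.card V : ℝ) := by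
      exact_mod_cast hcard.trans (card_le_univ _)
    have hscale := (mul_le_mul_of_nonneg_right (Nat.le_ceil (1 / x ^ 7)) (Nat.cast_nonneg _)).trans
      hle
    rwa [one_div_mul_eq_div, div_le_iff₀' (by positivity)] at hscale

theorem exists_sparseCut_of_light (hE : (E : Set (Finset V)).Sized 3) {x : ℝ} (hx : 0 < x)
    (hx1 : x ≤ 1 / 100) (hn : 1 ≤ Fintype.card V * x ^ 60)
    (hdirty : #(dirty E u v) ≤ x ^ 45 * Fintype.card V ^ 5)
    (hnbhd : x ^ 2 * Fintype.card V ≤ #(nbhd E u v))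
    (hlight : x ^ 8 * Fintype.card V ≤ #(light E u v (x ^ 7 * Fintype.card V))) :
    ∃ X Y, SparseCut E X Y (100 * x) := by
  obtain ⟨a, hale, hage, hwindow⟩ := exists_sparse_window E u v hx (by linarith)
  set R := light E u v a with hR
  set K := univ \ R with hK
  set n : ℝ := (Fintype.card V : ℝ)
  have hRcard : x ^ 8 * n ≤ #R := hlight.trans <| by
    refine Nat.cast_le.2 (card_le_card fun z hz ↦ ?_)
    exact mem_light.2 ⟨(mem_light.1 hz).1, (mem_light.1 hz).2.trans_le hale⟩
  have hKcard : x ^ 2 * n ≤ #K := hnbhd.trans <| by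
    refine Nat.cast_le.2 (card_le_card fun z hz ↦ mem_sdiff.2 ⟨mem_univ z, fun hzR ↦ ?_⟩)
    exact (adj_co.1 (mem_light.1 hzR).1).2 (mem_nbhd.1 hz)
  have hKR : (ordCount E K R : ℝ) ≤ 9 * x ^ 3 * #K ^ 2 * #R := by
    calc (ordCount E K R : ℝ) ≤ 9 * x ^ 7 * n ^ 2 * #R :=
          ordCount_compl_light_le_pow hE hx hx1 hn hdirty hage le_rfl hwindow hRcard
      _ = 9 * x ^ 3 * (x ^ 2 * n) ^ 2 * #R := by ring
      _ ≤ 9 * x ^ 3 * #K ^ 2 * #R := by gcongr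
  have htwo : 2 ≤ x ^ 8 * n := two_le_pow_eight_mul hx hx1 hn
  have hx82 : x ^ 8 * n ≤ x ^ 2 * n := by
    gcongr ?_ * n
    exact pow_le_pow_of_le_one hx.le (by linarith) (by norm_num)
  refine ⟨K, R, sdiff_disjoint, sdiff_union_of_subset (subset_univ R),
    Nat.cast_le.1 ((htwo.trans hx82).trans hKcard), Nat.cast_le.1 (htwo.trans hRcard),
    hKR.trans ?_, ?_⟩
  · gcongr ?_ * _ * _
    linarith [pow_le_of_le_one hx.le (by linarith : x ≤ 1) three_ne_zero]
  · refine (ordCount_le_of_ordCount_swap_le hE hx hx1 hn hdirty hKcard hRcard hKR).trans_eq ?_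
    ring

end LightVertices

section MixedPairs

variable {V : Type*} [Fintype V] [DecidableEq V] {E : Finset (Finset V)} {u v w : V} {t x : ℝ}

open Classical in
/-- The vertices whose pair with `v` has codegree at least `t` both in `E` and in its
complement. -/
noncomputable def mixed (E : Finset (Finset V)) (v : V) (t : ℝ) : Finset V :=
  {w | t ≤ #(nbhd E v w) ∧ t ≤ #(nbhd (co E) v w)}

theorem mem_mixed : w ∈ mixed E v t ↔ t ≤ #(nbhd E v w) ∧ t ≤ #(nbhd (co E) v w) := by
  simp [mixed]

theorem exists_mem_mixed_card_dirty_le {V : Type} [Fintype V] [DecidableEq V]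
    {E : Finset (Finset V)} (hx : 0 < x) (hx1 : x ≤ 1 / 100)
    (hn : 0 < Fintype.card V) (hD : inducedD2Count E < x ^ 60 * Fintype.card V ^ 4)
    (hmixed : x ^ 4 * Fintype.card V ^ 2 ≤ ∑ u, (#(mixed E u t) : ℝ)) :
    ∃ u, ∃ v ∈ mixed E u t, #(dirty E u v) ≤ x ^ 45 * (Fintype.card V : ℝ) ^ 5 := by
  by_contra! h
  have hdirty : ∑ u, ∑ v, (#(dirty E u v) : ℝ) ≤
      inducedD2Count E * (7 ^ 4 * (Fintype.card V : ℝ) ^ 3) := by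
    have := sum_card_dirty_le E
    rw [Fintype.sum_prod_type] at this
    exact_mod_cast this
  have hmany : ∑ u, #(mixed E u t) * (x ^ 45 * (Fintype.card V : ℝ) ^ 5) ≤
      ∑ u, ∑ v, (#(dirty E u v) : ℝ) := by
    refine sum_le_sum fun u _ ↦ ?_
    rw [← nsmul_eq_mul]
    exact (card_nsmul_le_sum _ _ _ fun v hv ↦ (h u v hv).le).trans
      (sum_le_univ_sum_of_nonneg fun _ ↦ Nat.cast_nonneg _)
  have hn' : (0 : ℝ) < Fintype.card V := Nat.cast_pos.2 hn
  set n : ℝ := (Fintype.card V : ℝ)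
  have hx11 : 7 ^ 4 * x ^ 11 ≤ 1 :=
    (mul_le_mul_of_nonneg_left (pow_le_pow_left₀ hx.le hx1 11) (by norm_num)).trans (by norm_num)
  refine lt_irrefl (x ^ 49 * n ^ 7) ?_
  calc x ^ 49 * n ^ 7 = x ^ 4 * n ^ 2 * (x ^ 45 * n ^ 5) := by ring
    _ ≤ (∑ u, (#(mixed E u t) : ℝ)) * (x ^ 45 * n ^ 5) := by gcongr
    _ ≤ inducedD2Count E * (7 ^ 4 * n ^ 3) := by
      rw [sum_mul]
      exact hmany.trans hdirty
    _ < x ^ 60 * n ^ 4 * (7 ^ 4 * n ^ 3) := by gcongr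
    _ = 7 ^ 4 * x ^ 11 * (x ^ 49 * n ^ 7) := by ring
    _ ≤ x ^ 49 * n ^ 7 := mul_le_of_le_one_left (by positivity) hx11

theorem exists_sparseCut_of_mem_mixed (hE : (E : Set (Finset V)).Sized 3) (hx : 0 < x)
    (hx1 : x ≤ 1 / 100) (hn : 1 ≤ Fintype.card V * x ^ 60)
    (hdirty : #(dirty E u v) ≤ x ^ 45 * Fintype.card V ^ 5)
    (hv : v ∈ mixed E u (x ^ 2 * Fintype.card V)) :
    ∃ X Y, SparseCut E X Y (100 * x) ∨ SparseCut (co E) X Y (100 * x) := by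
  obtain ⟨hnbhd, hnbhd_co⟩ := mem_mixed.1 hv
  have hn0 : (0 : ℝ) < Fintype.card V := pos_of_mul_pos_left (one_pos.trans_le hn) (by positivity)
  have hlight : x ^ 8 * Fintype.card V < #(light E u v (x ^ 7 * Fintype.card V)) ∨
      x ^ 8 * Fintype.card V < #(light (co E) u v (x ^ 7 * Fintype.card V)) := by
    refine lt_card_light_or_lt_card_light_co hE (by positivity) ?_ (hnbhd_co.trans_lt' ?_)
      (hdirty.trans_lt ?_)
    · nlinarith [show 0 ≤ x ^ 7 * Fintype.card V by positivity]
    · have hx6 : x ^ 6 ≤ x := pow_le_of_le_one hx.le (by linarith) (by norm_num)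
      nlinarith [show 0 < x ^ 2 * Fintype.card V by positivity]
    · have hx9 : x ^ 9 ≤ x := pow_le_of_le_one hx.le (by linarith) (by norm_num)
      calc x ^ 45 * (Fintype.card V : ℝ) ^ 5 = x ^ 9 * (x ^ 36 * Fintype.card V ^ 5) := by ring
        _ < (1 / 2) ^ 4 * (x ^ 36 * Fintype.card V ^ 5) := by gcongr; linarith
        _ = x ^ 8 * Fintype.card V * (x ^ 7 * Fintype.card V * (1 / 2)) ^ 4 := by ring
        _ ≤ x ^ 8 * Fintype.card V *
            (x ^ 7 * Fintype.card V - 2 * (x ^ 8 * Fintype.card V)) ^ 4 := by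
          gcongr
          nlinarith [show 0 ≤ x ^ 7 * Fintype.card V by positivity]
  rcases hlight with h | h
  · obtain ⟨X, Y, hXY⟩ := exists_sparseCut_of_light hE hx hx1 hn hdirty hnbhd h.le
    exact ⟨X, Y, Or.inl hXY⟩
  · obtain ⟨X, Y, hXY⟩ := exists_sparseCut_of_light (sized_co E) hx hx1 hn
      (by rwa [dirty_co hE]) hnbhd_co h.le
    exact ⟨X, Y, Or.inr hXY⟩

end MixedPairs

section FewMixedPairs

variable {V : Type*} [Fintype V] [DecidableEq V] {E : Finset (Finset V)} {v w : V} {t x : ℝ}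

open Classical in
/-- The vertices whose pair with `v` has codegree less than `t`. -/
noncomputable def lowCodegree (E : Finset (Finset V)) (v : V) (t : ℝ) : Finset V :=
  {w | #(nbhd E v w) < t}

theorem mem_lowCodegree : w ∈ lowCodegree E v t ↔ #(nbhd E v w) < t := by
  simp [lowCodegree]

open Classical in
/-- The vertices having codegree less than `t` with all but at most `5 * t` vertices. -/
noncomputable def sparseVertices (E : Finset (Finset V)) (t : ℝ) : Finset V :=
  {v | Fintype.card V - 5 * t ≤ #(lowCodegree E v t)}

theorem mem_sparseVertices :
    v ∈ sparseVertices E t ↔ Fintype.card V - 5 * t ≤ #(lowCodegree E v t) := by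
  simp [sparseVertices]

theorem card_lowCodegree_mul_card_lowCodegree_co_le (E : Finset (Finset V)) (v : V) (t : ℝ) :
    (#(lowCodegree (co E) v t) * #(lowCodegree E v t) : ℝ) ≤
      t * (#(lowCodegree (co E) v t) + #(lowCodegree E v t)) + 3 * Fintype.card V := by
  set A := lowCodegree (co E) v t
  set B := lowCodegree E v t
  have hsub : A ×ˢ B ⊆
      ((A.sigma fun a ↦ nbhd (co E) v a).image (fun p ↦ (p.1, p.2)) ∪
        (B.sigma fun b ↦ nbhd E v b).image (fun p ↦ (p.2, p.1))) ∪
      (univ.image (fun a ↦ (a, a)) ∪ univ.image (fun a ↦ (a, v)) ∪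
        univ.image (fun b ↦ (v, b))) := by
    rintro ⟨a, b⟩ hab
    have := adj_swap_right (E := E) (a := v) (b := a) (c := b)
    simp only [mem_product, mem_union, mem_image, mem_sigma, mem_nbhd, adj_co, mem_univ,
      true_and, Sigma.exists, Prod.mk.injEq] at hab ⊢
    grind
  have hcard : #A * #B ≤ (∑ a ∈ A, #(nbhd (co E) v a) + ∑ b ∈ B, #(nbhd E v b)) +
      (Fintype.card V + Fintype.card V + Fintype.card V) := by
    rw [← card_product, ← card_sigma, ← card_sigma, ← card_univ]
    refine (card_le_card hsub).trans ((card_union_le _ _).trans (add_le_add ?_ ?_))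
    · exact (card_union_le _ _).trans (add_le_add card_image_le card_image_le)
    · refine (card_union_le _ _).trans (add_le_add ?_ card_image_le)
      exact (card_union_le _ _).trans (add_le_add card_image_le card_image_le)
  have hA_sum : ∑ a ∈ A, (#(nbhd (co E) v a) : ℝ) ≤ #A * t := by
    rw [← nsmul_eq_mul]
    exact sum_le_card_nsmul _ _ _ fun a ha ↦ (mem_lowCodegree.1 ha).le
  have hB_sum : ∑ b ∈ B, (#(nbhd E v b) : ℝ) ≤ #B * t := by
    rw [← nsmul_eq_mul]
    exact sum_le_card_nsmul _ _ _ fun b hb ↦ (mem_lowCodegree.1 hb).le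
  have hcard' : (#A * #B : ℝ) ≤ (∑ a ∈ A, (#(nbhd (co E) v a) : ℝ) +
      ∑ b ∈ B, (#(nbhd E v b) : ℝ)) +
      (Fintype.card V + Fintype.card V + Fintype.card V) := by
    exact_mod_cast hcard
  linarith

theorem mem_sparseVertices_or_mem_sparseVertices_co (ht : 2 ≤ t) (htn : 100 * t ≤ Fintype.card V)
    (hmixed : #(mixed E v t) ≤ t) :
    v ∈ sparseVertices E t ∨ v ∈ sparseVertices (co E) t := by
  rw [mem_sparseVertices, mem_sparseVertices]
  have hcover : (Fintype.card V : ℝ) ≤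
      #(lowCodegree E v t) + #(lowCodegree (co E) v t) + #(mixed E v t) := by
    have hsub : (univ : Finset V) ⊆ lowCodegree E v t ∪ lowCodegree (co E) v t ∪ mixed E v t := by
      intro w _
      simp only [mem_union, mem_lowCodegree, mem_mixed]
      grind
    rw [← card_univ]
    exact_mod_cast (card_le_card hsub).trans
      ((card_union_le _ _).trans (Nat.add_le_add_right (card_union_le _ _) _))
  have hprod := card_lowCodegree_mul_card_lowCodegree_co_le E v t
  by_contra! h
  obtain ⟨hlow, hlow_co⟩ := h
  set p : ℝ := (#(lowCodegree E v t) : ℝ)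
  set q : ℝ := (#(lowCodegree (co E) v t) : ℝ)
  have hpq : 0 ≤ (p - 4 * t) * (q - 4 * t) := mul_nonneg (by linarith) (by linarith)
  nlinarith

theorem sum_card_nbhd_le_of_mem_sparseVertices (ht : 0 ≤ t) (hv : v ∈ sparseVertices E t) :
    ∑ w, (#(nbhd E v w) : ℝ) ≤ 6 * t * Fintype.card V := by
  have hlow := mem_sparseVertices.1 hv
  have hin : ∑ w ∈ lowCodegree E v t, (#(nbhd E v w) : ℝ) ≤ Fintype.card V * t := by
    refine (sum_le_card_nsmul _ _ t fun w hw ↦ (mem_lowCodegree.1 hw).le).trans ?_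
    rw [nsmul_eq_mul]
    gcongr
    exact card_le_univ _
  have hout : ∑ w ∈ (lowCodegree E v t)ᶜ, (#(nbhd E v w) : ℝ) ≤ 5 * t * Fintype.card V := by
    refine (sum_le_card_nsmul _ _ (Fintype.card V : ℝ) fun w _ ↦
      Nat.cast_le.2 (card_le_univ _)).trans ?_
    rw [nsmul_eq_mul, card_compl, Nat.cast_sub (card_le_univ _)]
    gcongr
    linarith
  rw [← sum_add_sum_compl (lowCodegree E v t)]
  linarith

theorem card_filter_adj_le_sum_card_nbhd (E : Finset (Finset V)) (Y : Finset V) (v : V) :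
    #{p ∈ Y ×ˢ Y | Adj E p.1 p.2 v} ≤ ∑ w, #(nbhd E v w) := by
  rw [← card_sigma]
  refine card_le_card_of_injOn (fun p ↦ ⟨p.1, p.2⟩) ?_ ?_
  · intro p hp
    have hp := (mem_filter.1 hp).2
    exact mem_coe.2 (mem_sigma.2 ⟨mem_univ _,
      mem_nbhd.2 (adj_swap_left.1 (adj_swap_right.1 hp))⟩)
  · rintro ⟨a, b⟩ _ ⟨a', b'⟩ _ h
    simp_all

theorem ordCount_pair_le (hE : (E : Set (Finset V)).Sized 3) (hvw : v ≠ w) (Y : Finset V) :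
    ordCount E {v, w} Y ≤ 2 * #(nbhd E v w) := by
  have hle (a b : V) : #{y ∈ Y | Adj E a b y} ≤ #(nbhd E a b) :=
    card_le_card fun y hy ↦ mem_nbhd.2 (mem_filter.1 hy).2
  rw [ordCount_eq_sum, sum_product, sum_pair hvw, sum_pair hvw, sum_pair hvw]
  have hv := hle v v
  have hw := hle w w
  rw [nbhd_self hE, card_empty] at hv hw
  have hwv := hle w v
  rw [nbhd_comm] at hwv
  linarith [hle v w]

theorem sparseCut_pair (hE : (E : Set (Finset V)).Sized 3) (hx : 0 < x) (hx1 : x ≤ 1 / 100)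
    (hn : 100 ≤ Fintype.card V) (hvw : v ≠ w) (hlow : w ∈ lowCodegree E v (x ^ 2 * Fintype.card V))
    (hv : v ∈ sparseVertices E (x ^ 2 * Fintype.card V))
    (hw : w ∈ sparseVertices E (x ^ 2 * Fintype.card V)) :
    SparseCut E {v, w} (univ \ {v, w}) (100 * x) := by
  have hcard : #(univ \ {v, w}) = Fintype.card V - 2 := by
    rw [card_sdiff_of_subset (subset_univ _), card_univ, card_pair hvw]
  have hn' : (100 : ℝ) ≤ Fintype.card V := by exact_mod_cast hn
  have hpair : (ordCount E {v, w} (univ \ {v, w}) : ℝ) ≤ 2 * #(nbhd E v w) := by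
    exact_mod_cast ordCount_pair_le hE hvw _
  have hswap : (ordCount E (univ \ {v, w}) {v, w} : ℝ) ≤
      ∑ z, (#(nbhd E v z) : ℝ) + ∑ z, (#(nbhd E w z) : ℝ) := by
    rw [ordCount_eq_sum_apex, sum_pair hvw]
    exact_mod_cast add_le_add (card_filter_adj_le_sum_card_nbhd E _ v)
      (card_filter_adj_le_sum_card_nbhd E _ w)
  have hv_sum := sum_card_nbhd_le_of_mem_sparseVertices (by positivity) hv
  have hw_sum := sum_card_nbhd_le_of_mem_sparseVertices (by positivity) hw
  have hlow := mem_lowCodegree.1 hlow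
  refine ⟨disjoint_sdiff, union_sdiff_of_subset (subset_univ _), (card_pair hvw).ge, by omega,
    ?_, ?_⟩
  all_goals
    rw [hcard, card_pair hvw, Nat.cast_sub (by omega)]
    push_cast
    set n : ℝ := (Fintype.card V : ℝ)
  · have hxn : x ^ 2 * n ≤ x * (2 * (n - 2)) := by
      gcongr
      · exact pow_le_of_le_one hx.le (by linarith) two_ne_zero
      · linarith
    nlinarith
  · have hxn : x ^ 2 * n ^ 2 ≤ x * (2 * (n - 2) ^ 2) := by
      gcongr
      · exact pow_le_of_le_one hx.le (by linarith) two_ne_zero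
      · nlinarith
    nlinarith

theorem exists_sparseCut_of_lt_card_sparseVertices (hE : (E : Set (Finset V)).Sized 3) (hx : 0 < x)
    (hx1 : x ≤ 1 / 100) (hn : 100 ≤ Fintype.card V)
    (hmany : 5 * (x ^ 2 * Fintype.card V) + 1 < #(sparseVertices E (x ^ 2 * Fintype.card V))) :
    ∃ X Y, SparseCut E X Y (100 * x) := by
  set S := sparseVertices E (x ^ 2 * Fintype.card V)
  obtain ⟨v, hv⟩ : S.Nonempty := card_pos.1 (Nat.cast_pos.1 (hmany.trans' (by positivity)))
  have hv_low := mem_sparseVertices.1 hv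
  have hinter : 1 < #(S ∩ lowCodegree E v (x ^ 2 * Fintype.card V)) := by
    have hcard := card_union_add_card_inter S (lowCodegree E v (x ^ 2 * Fintype.card V))
    have huniv := card_le_univ (S ∪ lowCodegree E v (x ^ 2 * Fintype.card V))
    have hlt : (Fintype.card V + 1 : ℝ) < #S + #(lowCodegree E v (x ^ 2 * Fintype.card V)) := by
      linarith
    norm_cast at hlt
    omega
  obtain ⟨w, hw, hwv⟩ := exists_mem_ne hinter v
  obtain ⟨hwS, hw⟩ := mem_inter.1 hw
  exact ⟨_, _, sparseCut_pair hE hx hx1 hn hwv.symm hw hv hwS⟩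

theorem sub_le_card_sparseVertices_add_co (ht : 2 ≤ t) (htn : 100 * t ≤ Fintype.card V)
    (hmixed : ∑ v, (#(mixed E v t) : ℝ) ≤ t ^ 2) :
    Fintype.card V - t ≤ (#(sparseVertices E t) : ℝ) + #(sparseVertices (co E) t) := by
  classical
  set W : Finset V := {v | t < #(mixed E v t)}
  have hW : (#W : ℝ) ≤ t := by
    refine le_of_mul_le_mul_right ?_ (by linarith : 0 < t)
    rw [← nsmul_eq_mul, ← sq]
    exact (card_nsmul_le_sum _ _ _ fun v hv ↦ (mem_filter.1 hv).2.le).trans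
      ((sum_le_univ_sum_of_nonneg fun _ ↦ Nat.cast_nonneg _).trans hmixed)
  have hcover : (univ : Finset V) ⊆ W ∪ (sparseVertices E t ∪ sparseVertices (co E) t) := by
    intro v _
    rw [mem_union, mem_union, mem_filter_univ, or_iff_not_imp_left, not_lt]
    exact mem_sparseVertices_or_mem_sparseVertices_co ht htn
  have hcard : (Fintype.card V : ℝ) ≤
      #W + (#(sparseVertices E t) + #(sparseVertices (co E) t)) := by
    rw [← card_univ]
    exact_mod_cast (card_le_card hcover).trans
      ((card_union_le _ _).trans (Nat.add_le_add_left (card_union_le _ _) _))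
  linarith

theorem exists_sparseCut_of_sum_card_mixed_le (hE : (E : Set (Finset V)).Sized 3) (hx : 0 < x)
    (hx1 : x ≤ 1 / 100) (hn : 1 ≤ Fintype.card V * x ^ 60)
    (hmixed : ∑ v, (#(mixed E v (x ^ 2 * Fintype.card V)) : ℝ) ≤ x ^ 4 * Fintype.card V ^ 2) :
    ∃ X Y, SparseCut E X Y (100 * x) ∨ SparseCut (co E) X Y (100 * x) := by
  have ht : 2 ≤ x ^ 2 * Fintype.card V := (two_le_pow_eight_mul hx hx1 hn).trans <| by
    gcongr ?_ * _
    exact pow_le_pow_of_le_one hx.le (by linarith) (by norm_num)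
  have htn : 100 * (x ^ 2 * Fintype.card V) ≤ Fintype.card V := by
    have hx2 : 100 * x ^ 2 ≤ 1 := by nlinarith
    nlinarith [mul_le_mul_of_nonneg_right hx2 (Nat.cast_nonneg (α := ℝ) (Fintype.card V))]
  have hn100 : 100 ≤ Fintype.card V := by
    rw [← Nat.cast_le (α := ℝ), Nat.cast_ofNat]
    linarith
  have hmany := sub_le_card_sparseVertices_add_co ht htn (hmixed.trans_eq (by ring))
  rcases lt_or_ge (5 * (x ^ 2 * Fintype.card V) + 1)
    (#(sparseVertices E (x ^ 2 * Fintype.card V)) : ℝ) with h | h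
  · obtain ⟨X, Y, hXY⟩ := exists_sparseCut_of_lt_card_sparseVertices hE hx hx1 hn100 h
    exact ⟨X, Y, Or.inl hXY⟩
  · obtain ⟨X, Y, hXY⟩ := exists_sparseCut_of_lt_card_sparseVertices (sized_co E) hx hx1 hn100
      (by linarith)
    exact ⟨X, Y, Or.inr hXY⟩

end FewMixedPairs

theorem exists_sparseCut {V : Type} [Fintype V] [DecidableEq V] {E : Finset (Finset V)} {x : ℝ}
    (hE : (E : Set (Finset V)).Sized 3) (hx : 0 < x) (hx1 : x ≤ 1 / 100)
    (hn : 1 ≤ Fintype.card V * x ^ 60) (hD : inducedD2Count E < x ^ 60 * Fintype.card V ^ 4) :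
    ∃ X Y, SparseCut E X Y (100 * x) ∨ SparseCut (co E) X Y (100 * x) := by
  rcases le_total (∑ v, (#(mixed E v (x ^ 2 * Fintype.card V)) : ℝ))
    (x ^ 4 * Fintype.card V ^ 2) with hmixed | hmixed
  · exact exists_sparseCut_of_sum_card_mixed_le hE hx hx1 hn hmixed
  · have hn0 : 0 < Fintype.card V :=
      Nat.cast_pos.1 (pos_of_mul_pos_left (one_pos.trans_le hn) (by positivity))
    obtain ⟨u, v, hv, hdirty⟩ := exists_mem_mixed_card_dirty_le hx hx1 hn0 hD hmixed
    exact exists_sparseCut_of_mem_mixed hE hx hx1 hn hdirty hv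

theorem one_le_mul_div_pow_and_lt_div_pow_mul {C ε n d : ℝ} (hC : C = 100 ^ 60) (hε : 0 < ε)
    (hε1 : ε < 1) (hn : C * ε ^ (-C) ≤ n) (hd : d < ε ^ C / C * n ^ 4) :
    1 ≤ n * (ε / 100) ^ 60 ∧ d < (ε / 100) ^ 60 * n ^ 4 := by
  have hCpos : 0 < C := by rw [hC]; positivity
  have hpow : ε ^ C ≤ ε ^ 60 := by
    rw [← Real.rpow_natCast]
    exact Real.rpow_le_rpow_of_exponent_ge hε hε1.le (by rw [hC]; norm_num)
  have hdiv : (ε / 100) ^ 60 = ε ^ 60 / C := by rw [hC, div_pow]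
  have hεC : 0 < ε ^ C := Real.rpow_pos_of_pos hε C
  rw [hdiv]
  constructor
  · calc 1 ≤ ε ^ 60 / ε ^ C := (one_le_div₀ hεC).2 hpow
      _ = C * ε ^ (-C) * (ε ^ 60 / C) := by
        rw [Real.rpow_neg hε.le]
        field_simp
      _ ≤ n * (ε ^ 60 / C) := by gcongr
  · have hdivC : ε ^ C / C ≤ ε ^ 60 / C := div_le_div_of_nonneg_right hpow hCpos.le
    exact hd.trans_le (by gcongr)

end ThreeGraph

/-- With polynomial dependencies: a 3-uniform hypergraph with few induced copies of `D₂`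
admits a partition of its vertex set into two nonempty parts forming an `ε`-homogeneous
pair. -/
theorem main_lemma_testing :
    ∃ C : ℝ, C > 0 ∧ ∀ ε : ℝ, 0 < ε → ε < 1 →
      ∀ (V : Type) [Fintype V] [DecidableEq V] (E : Finset (Finset V)),
        (∀ e ∈ E, e.card = 3) →
        (Fintype.card V : ℝ) ≥ C * ε ^ (-C) →
        (inducedD2Count E : ℝ) < (ε ^ C / C) * (Fintype.card V : ℝ) ^ 4 →
        ∃ X Y : Finset V,
          Disjoint X Y ∧ X ∪ Y = Finset.univ ∧
          X.Nonempty ∧ Y.Nonempty ∧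
          EpsHomogeneous E X Y ε := by
  obtain ⟨C, hC⟩ : ∃ C : ℝ, C = 100 ^ 60 := ⟨_, rfl⟩
  refine ⟨C, hC ▸ by positivity, fun ε hε hε1 V _ _ E hE hn hd ↦ ?_⟩
  obtain ⟨hn, hd⟩ := ThreeGraph.one_le_mul_div_pow_and_lt_div_pow_mul hC hε hε1 hn hd
  obtain ⟨X, Y, hXY⟩ := ThreeGraph.exists_sparseCut hE (by positivity) (by linarith) hn hd
  rw [mul_div_cancel₀ ε (by norm_num : (100 : ℝ) ≠ 0)] at hXY
  rcases hXY with h | h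
  · exact ⟨X, Y, h.disjoint, h.union_eq_univ, h.left_nonempty, h.right_nonempty,
      h.epsHomogeneous hE hε.le⟩
  · exact ⟨X, Y, h.disjoint, h.union_eq_univ, h.left_nonempty, h.right_nonempty,
      h.epsHomogeneous_of_co hε.le⟩
end

section
/- Every cohypergraph is induced D₂-free: if a 3-uniform hypergraph H is a cohypergraph, then no 4 vertices of H span exactly 2 edges of H. -/
open Finset

/-- The pair `(X,Y)` of disjoint vertex sets is homogeneous in the 3-uniform hypergraph
`E`: either every triple with two vertices in one of the sets and one vertex in the other
is an edge, or no such triple is an edge. -/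
def HomogPair {V : Type} [DecidableEq V] (E : Finset (Finset V)) (X Y : Finset V) : Prop :=
  (∀ t : Finset V, t.card = 3 →
      (((t ∩ X).card = 2 ∧ (t ∩ Y).card = 1) ∨ ((t ∩ Y).card = 2 ∧ (t ∩ X).card = 1)) →
      t ∈ E) ∨
  (∀ t : Finset V, t.card = 3 →
      (((t ∩ X).card = 2 ∧ (t ∩ Y).card = 1) ∨ ((t ∩ Y).card = 2 ∧ (t ∩ X).card = 1)) →
      t ∉ E)

/-- `IsCoHyp E A` means that the subhypergraph of `E` induced on the vertex set `A` is a
cohypergraph: either `A` is a single vertex, or `A` splits into two nonempty parts forming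
a homogeneous pair, each inducing a cohypergraph. -/
inductive IsCoHyp {V : Type} [DecidableEq V] (E : Finset (Finset V)) : Finset V → Prop
  | single (v : V) : IsCoHyp E {v}
  | split (X Y : Finset V) : X.Nonempty → Y.Nonempty → Disjoint X Y →
      HomogPair E X Y → IsCoHyp E X → IsCoHyp E Y → IsCoHyp E (X ∪ Y)

/-! Being a cohypergraph is hereditary, so four vertices of a cohypergraph split into a homogeneous
pair. Two distinct triples of a 4-set share a vertex and together cover the 4-set, so they cannot
each lie inside one of the two parts: at least three of the four triples cross the split. The
crossing triples are all edges or all non-edges, so there are at least three edges or at most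
one. -/

/-- The set `t` crosses the pair `(X, Y)`: it lies in `X ∪ Y` and meets both parts. For disjoint
`X` and `Y`, the crossing triples are those with two vertices in one part and one in the other,
i.e. the triples that homogeneity of `(X, Y)` is about. -/
def Crosses {V : Type*} [DecidableEq V] (X Y t : Finset V) : Prop :=
  t ⊆ X ∪ Y ∧ (t ∩ X).Nonempty ∧ (t ∩ Y).Nonempty

section Crossing

variable {V : Type*} [DecidableEq V] {X Y X' Y' s t : Finset V}

lemma Crosses.mono (h : Crosses X' Y' t) (hX : X' ⊆ X) (hY : Y' ⊆ Y) : Crosses X Y t :=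
  ⟨h.1.trans (union_subset_union hX hY), h.2.1.mono (inter_subset_inter_left hX),
    h.2.2.mono (inter_subset_inter_left hY)⟩

lemma crosses_iff_card_inter (hXY : Disjoint X Y) (ht : #t = 3) :
    Crosses X Y t ↔
      (#(t ∩ X) = 2 ∧ #(t ∩ Y) = 1) ∨ (#(t ∩ Y) = 2 ∧ #(t ∩ X) = 1) := by
  have hsum : #(t ∩ (X ∪ Y)) = #(t ∩ X) + #(t ∩ Y) := by
    rw [inter_union_distrib_left,
      card_union_of_disjoint (hXY.mono inter_subset_right inter_subset_right)]
  have hsub : t ⊆ X ∪ Y ↔ #(t ∩ (X ∪ Y)) = 3 := by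
    rw [← inter_eq_left, ← ht]
    exact ⟨congrArg card, fun h ↦ eq_of_subset_of_card_le inter_subset_left h.ge⟩
  rw [Crosses, hsub, hsum, ← card_pos, ← card_pos]
  omega

lemma disjoint_or_disjoint_of_not_crosses (ht : t ⊆ X ∪ Y) (h : ¬Crosses X Y t) :
    Disjoint t X ∨ Disjoint t Y := by
  by_contra! hmeet
  exact h ⟨ht, not_disjoint_iff_nonempty_inter.mp hmeet.1,
    not_disjoint_iff_nonempty_inter.mp hmeet.2⟩

lemma union_eq_of_card_eq_succ {S : Finset V} {n : ℕ} (hS : #S = n + 1) (hsS : s ⊆ S)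
    (htS : t ⊆ S) (hs : #s = n) (ht : #t = n) (hst : s ≠ t) : s ∪ t = S := by
  refine eq_of_subset_of_card_le (union_subset hsS htS) ?_
  by_contra! hlt
  have hs_eq : s = s ∪ t := eq_of_subset_of_card_le subset_union_left (by omega)
  have ht_eq : t = s ∪ t := eq_of_subset_of_card_le subset_union_right (by omega)
  exact hst (hs_eq.trans ht_eq.symm)

lemma eq_of_not_crosses {n : ℕ} (hn : 2 ≤ n) (hX : X.Nonempty) (hY : Y.Nonempty)
    (hcard : #(X ∪ Y) = n + 1) (hsXY : s ⊆ X ∪ Y) (htXY : t ⊆ X ∪ Y) (hs : #s = n) (ht : #t = n)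
    (hs_cross : ¬Crosses X Y s) (ht_cross : ¬Crosses X Y t) : s = t := by
  by_contra hst
  have hunion : s ∪ t = X ∪ Y := union_eq_of_card_eq_succ hcard hsXY htXY hs ht hst
  obtain ⟨v, hv⟩ : (s ∩ t).Nonempty := by
    have := card_union_add_card_inter s t
    rw [hunion] at this
    rw [← card_pos]
    omega
  obtain ⟨hvs, hvt⟩ := mem_inter.mp hv
  have hv_part : v ∈ X ∨ v ∈ Y := mem_union.mp (hsXY hvs)
  obtain hsX | hsY := disjoint_or_disjoint_of_not_crosses hsXY hs_cross <;>
    obtain htX | htY := disjoint_or_disjoint_of_not_crosses htXY ht_cross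
  · have hdisj : Disjoint (X ∪ Y) X := hunion ▸ disjoint_union_left.mpr ⟨hsX, htX⟩
    exact hX.ne_empty (disjoint_self.mp (hdisj.mono_left subset_union_left))
  · exact hv_part.elim (disjoint_left.mp hsX hvs) (disjoint_left.mp htY hvt)
  · exact hv_part.elim (disjoint_left.mp htX hvt) (disjoint_left.mp hsY hvs)
  · have hdisj : Disjoint (X ∪ Y) Y := hunion ▸ disjoint_union_left.mpr ⟨hsY, htY⟩
    exact hY.ne_empty (disjoint_self.mp (hdisj.mono_left subset_union_right))

end Crossing

section Cohypergraph

variable {V : Type} [DecidableEq V] {E : Finset (Finset V)} {X Y X' Y' A S : Finset V}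

lemma homogPair_iff_crosses (hXY : Disjoint X Y) :
    HomogPair E X Y ↔
      (∀ t, #t = 3 → Crosses X Y t → t ∈ E) ∨ (∀ t, #t = 3 → Crosses X Y t → t ∉ E) := by
  simp +contextual only [HomogPair, crosses_iff_card_inter hXY]

lemma HomogPair.mono (h : HomogPair E X Y) (hXY : Disjoint X Y) (hX : X' ⊆ X) (hY : Y' ⊆ Y) :
    HomogPair E X' Y' := by
  rw [homogPair_iff_crosses hXY] at h
  rw [homogPair_iff_crosses (hXY.mono hX hY)]
  exact h.imp (fun hall t ht hc ↦ hall t ht (hc.mono hX hY))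
    (fun hnone t ht hc ↦ hnone t ht (hc.mono hX hY))

lemma IsCoHyp.subset (hA : IsCoHyp E A) (hSA : S ⊆ A) (hS : S.Nonempty) : IsCoHyp E S := by
  induction hA generalizing S with
  | single v =>
    rw [hS.subset_singleton_iff.mp hSA]
    exact .single v
  | split X Y _ _ hXY hhom _ _ ihX ihY =>
    have hS_eq : S ∩ X ∪ S ∩ Y = S := by
      rw [← inter_union_distrib_left, inter_eq_left.mpr hSA]
    obtain hSX | hSX := (S ∩ X).eq_empty_or_nonempty
    · rw [hSX, empty_union] at hS_eq
      exact ihY (inter_eq_left.mp hS_eq) hS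
    obtain hSY | hSY := (S ∩ Y).eq_empty_or_nonempty
    · rw [hSY, union_empty] at hS_eq
      exact ihX (inter_eq_left.mp hS_eq) hS
    rw [← hS_eq]
    exact .split _ _ hSX hSY (hXY.mono inter_subset_right inter_subset_right)
      (hhom.mono hXY inter_subset_right inter_subset_right)
      (ihX inter_subset_right hSX) (ihY inter_subset_right hSY)

lemma HomogPair.card_edges_le_one_or_three_le (h : HomogPair E X Y) (hE : ∀ e ∈ E, #e = 3)
    (hXY : Disjoint X Y) (hX : X.Nonempty) (hY : Y.Nonempty) (hcard : #(X ∪ Y) = 4) :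
    #{e ∈ E | e ⊆ X ∪ Y} ≤ 1 ∨ 3 ≤ #{e ∈ E | e ⊆ X ∪ Y} := by
  have card_le_one_of_not_crosses (F : Finset (Finset V))
      (hF : ∀ t ∈ F, t ⊆ X ∪ Y ∧ #t = 3 ∧ ¬Crosses X Y t) : #F ≤ 1 := by
    refine card_le_one.mpr fun s hs t ht ↦ ?_
    obtain ⟨hsXY, hs_card, hs_cross⟩ := hF s hs
    obtain ⟨htXY, ht_card, ht_cross⟩ := hF t ht
    exact eq_of_not_crosses (by norm_num) hX hY hcard hsXY htXY hs_card ht_card hs_cross ht_cross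
  obtain hall | hnone := (homogPair_iff_crosses hXY).mp h
  · right
    have htriples : #((X ∪ Y).powersetCard 3) = 4 := by
      rw [card_powersetCard, hcard, Nat.choose_succ_self_right]
    have hnonedges : #((X ∪ Y).powersetCard 3 \ {e ∈ E | e ⊆ X ∪ Y}) ≤ 1 := by
      refine card_le_one_of_not_crosses _ fun t ht ↦ ?_
      rw [mem_sdiff, mem_powersetCard, mem_filter] at ht
      obtain ⟨⟨htXY, ht_card⟩, ht_edge⟩ := ht
      exact ⟨htXY, ht_card, fun hc ↦ ht_edge ⟨hall t ht_card hc, htXY⟩⟩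
    have := le_card_sdiff {e ∈ E | e ⊆ X ∪ Y} ((X ∪ Y).powersetCard 3)
    omega
  · left
    refine card_le_one_of_not_crosses _ fun t ht ↦ ?_
    obtain ⟨htE, htXY⟩ := mem_filter.mp ht
    exact ⟨htXY, hE t htE, fun hc ↦ hnone t (hE t htE) hc htE⟩

lemma IsCoHyp.card_edges_ne_two (hS : IsCoHyp E S) (hE : ∀ e ∈ E, #e = 3) (hcard : #S = 4) :
    #{e ∈ E | e ⊆ S} ≠ 2 := by
  cases hS with
  | single v => simp at hcard
  | split X Y hX hY hXY hhom _ _ =>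
    have := hhom.card_edges_le_one_or_three_le hE hXY hX hY hcard
    omega

end Cohypergraph

/-- Every cohypergraph is induced `D₂`-free: no 4 vertices span exactly 2 edges. -/
theorem cohypergraph_D2_free {V : Type} [Fintype V] [DecidableEq V]
    (E : Finset (Finset V)) (hE : ∀ e ∈ E, e.card = 3)
    (hco : IsCoHyp E (Finset.univ : Finset V)) :
    ∀ S : Finset V, S.card = 4 → (E.filter (fun e => e ⊆ S)).card ≠ 2 := by
  intro S hS
  have hS_nonempty : S.Nonempty := card_pos.mp (by omega)
  exact (hco.subset (subset_univ S) hS_nonempty).card_edges_ne_two hE hS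
end

section
/- Let β > 0 and let H be a 3-uniform hypergraph on n vertices with n ≥ 4/β and β ≤ d(H) ≤ 1 − β. Then there is a vertex v ∈ V(H) with β²/16 ≤ d(L(v)) ≤ 1 − β²/16. -/
open Finset

/-- The edge density of a 3-uniform hypergraph: `|E| / C(n,3)`. -/
noncomputable def densH {V : Type} [Fintype V] [DecidableEq V]
    (E : Finset (Finset V)) : ℝ :=
  (E.card : ℝ) / ((Fintype.card V).choose 3 : ℝ)

/-- The density of the link graph of `v`: the number of hyperedges containing `v`,
divided by `C(n-1, 2)`. -/
noncomputable def dLinkDensity {V : Type} [Fintype V] [DecidableEq V]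
    (E : Finset (Finset V)) (v : V) : ℝ :=
  ((E.filter (fun e => v ∈ e)).card : ℝ) / ((Fintype.card V - 1).choose 2 : ℝ)

/-!
Double counting makes the density of a hypergraph the average of the densities of its vertex links,
and the density of the link of `x` the average over `y ≠ x` of the normalised codegree
`w x y ∈ [0, 1]`. So it suffices to treat a symmetric weight `w` on the pairs of an `n`-set.
If every weighted degree is below `ε` or above `1 - ε`, let `B` and `A` be the corresponding sets of
vertices. Weighing the pairs in `A × B` by `w` from the side of `B`, and by `1 - w` from the side of
`A`, gives `#A * #B ≤ ε * n * (n - 1)`. If the average degree lies in `[β, 1 - β]`, both `A` and `B`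
have at least `(β - ε) * n` elements and one of them has at least `n / 2`, so
`#A * #B ≥ (β - ε) / 2 * n ^ 2`. For `ε = β / 3` the two bounds are incompatible.
-/

open scoped BigOperators

section WeightedGraph

lemma expect_mem_Icc_zero_one {ι : Type*} {s : Finset ι} {f : ι → ℝ}
    (hf : ∀ i ∈ s, f i ∈ Set.Icc 0 1) : 𝔼 i ∈ s, f i ∈ Set.Icc 0 1 := by
  refine ⟨expect_nonneg fun i hi ↦ (hf i hi).1, ?_⟩
  obtain rfl | hs := s.eq_empty_or_nonempty
  · simp
  · exact expect_le hs fun i hi ↦ (hf i hi).2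

variable {V : Type*} [Fintype V] [DecidableEq V]

lemma card_mul_expect_le_add_compl {f : V → ℝ} {A : Finset V} {a b : ℝ} (hA : ∀ x ∈ A, f x ≤ a)
    (hAc : ∀ x ∈ Aᶜ, f x ≤ b) : Fintype.card V * 𝔼 x, f x ≤ #A * a + #Aᶜ * b := by
  rw [Fintype.card_mul_expect, ← sum_add_sum_compl A]
  simp only [← nsmul_eq_mul]
  exact add_le_add (sum_le_card_nsmul _ _ _ hA) (sum_le_card_nsmul _ _ _ hAc)

/-- The degree of `x` in the graph on `V` with edge weights `w`, divided by `|V| - 1`. Loops are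
ignored, and the value is `0` if `x` is the only vertex. -/
noncomputable def normalizedDegree (w : V → V → ℝ) (x : V) : ℝ :=
  𝔼 y ∈ {x}ᶜ, w x y

variable {w : V → V → ℝ}

lemma sum_sum_le_card_mul (hw : ∀ x y, x ≠ y → 0 ≤ w x y) {A B : Finset V} (hAB : Disjoint A B)
    {c : ℝ} (hA : ∀ x ∈ A, ∑ y ∈ {x}ᶜ, w x y ≤ c) : ∑ x ∈ A, ∑ y ∈ B, w x y ≤ #A * c := by
  rw [← nsmul_eq_mul]
  refine sum_le_card_nsmul _ _ _ fun x hx ↦ le_trans ?_ (hA x hx)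
  exact sum_le_sum_of_subset_of_nonneg (subset_compl_singleton.2 <| disjoint_left.1 hAB hx)
    fun y hy _ ↦ hw x y <| by simpa [eq_comm] using hy

lemma card_mul_card_le_of_normalizedDegree (hsymm : ∀ x y, w x y = w y x)
    (hw : ∀ x y, x ≠ y → w x y ∈ Set.Icc 0 1) {A B : Finset V} (hAB : Disjoint A B) {ε : ℝ}
    (hA : ∀ x ∈ A, 1 - ε ≤ normalizedDegree w x) (hB : ∀ x ∈ B, normalizedDegree w x ≤ ε) :
    (#A * #B : ℝ) ≤ (#A + #B) * ((Fintype.card V - 1) * ε) := by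
  have card_others (x : V) : (#({x}ᶜ : Finset V) : ℝ) = Fintype.card V - 1 := by
    rw [card_compl, card_singleton, Nat.cast_pred (Fintype.card_pos_iff.2 ⟨x⟩)]
  have sum_eq (x : V) : ∑ y ∈ {x}ᶜ, w x y = (Fintype.card V - 1) * normalizedDegree w x := by
    rw [normalizedDegree, ← card_mul_expect, card_others]
  have card_nonneg (x : V) : (0 : ℝ) ≤ Fintype.card V - 1 := card_others x ▸ Nat.cast_nonneg _
  have weight_le : ∑ y ∈ B, ∑ x ∈ A, w y x ≤ #B * ((Fintype.card V - 1) * ε) := by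
    refine sum_sum_le_card_mul (fun x y hxy ↦ (hw x y hxy).1) hAB.symm fun y hy ↦ ?_
    rw [sum_eq]
    exact mul_le_mul_of_nonneg_left (hB y hy) (card_nonneg y)
  have coweight_le : ∑ x ∈ A, ∑ y ∈ B, (1 - w x y) ≤ #A * ((Fintype.card V - 1) * ε) := by
    refine sum_sum_le_card_mul (fun x y hxy ↦ sub_nonneg.2 (hw x y hxy).2) hAB fun x hx ↦ ?_
    rw [sum_sub_distrib, sum_const, nsmul_one, sum_eq, card_others, ← mul_one_sub]
    exact mul_le_mul_of_nonneg_left (sub_le_comm.1 (hA x hx)) (card_nonneg x)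
  calc (#A * #B : ℝ) = ∑ x ∈ A, ∑ y ∈ B, ((1 - w x y) + w y x) := by simp [hsymm]
    _ = ∑ x ∈ A, ∑ y ∈ B, (1 - w x y) + ∑ y ∈ B, ∑ x ∈ A, w y x := by
        simp only [sum_add_distrib, sum_comm (s := B)]
    _ ≤ (#A + #B) * ((Fintype.card V - 1) * ε) := by linarith

lemma div_three_mul_sq_le_mul {a b β : ℝ} (ha : 0 ≤ a) (hb : 0 ≤ b) (hβ : 0 ≤ β)
    (hβa : β * (a + b) ≤ a + b * (β / 3)) (hβb : β * (a + b) ≤ b + a * (β / 3)) :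
    β / 3 * (a + b) ^ 2 ≤ a * b := by
  wlog hle : a ≤ b generalizing a b
  · rw [mul_comm a b, add_comm a b]
    exact this hb ha (add_comm a b ▸ hβb) (add_comm a b ▸ hβa) (le_of_not_ge hle)
  have le_a : 2 * (β / 3) * (a + b) ≤ a := by nlinarith
  calc β / 3 * (a + b) ^ 2 = 2 * (β / 3) * (a + b) * ((a + b) / 2) := by ring
    _ ≤ a * b := mul_le_mul le_a (by linarith) (by linarith) ha

lemma div_three_mul_card_sq_le_of_expect_mem_Icc {d : V → ℝ} (hd : ∀ x, d x ∈ Set.Icc 0 1) {β : ℝ}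
    (hβ : 0 ≤ β) (hmean : 𝔼 x, d x ∈ Set.Icc β (1 - β)) {A : Finset V}
    (hA : ∀ x ∈ A, 1 - β / 3 ≤ d x) (hAc : ∀ x ∈ Aᶜ, d x ≤ β / 3) :
    β / 3 * Fintype.card V ^ 2 ≤ (#A * #Aᶜ : ℝ) := by
  obtain ⟨hlower, hupper⟩ := hmean
  have card_add : (#A + #Aᶜ : ℝ) = Fintype.card V := mod_cast card_add_card_compl A
  have mean_le : Fintype.card V * 𝔼 x, d x ≤ #A * 1 + #Aᶜ * (β / 3) :=
    card_mul_expect_le_add_compl (fun x _ ↦ (hd x).2) hAc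
  have comean_le : Fintype.card V * (1 - 𝔼 x, d x) ≤ #A * (β / 3) + #Aᶜ * 1 :=
    calc Fintype.card V * (1 - 𝔼 x, d x) = Fintype.card V * 𝔼 x, (1 - d x) := by
          rw [mul_one_sub, Fintype.card_mul_expect, Fintype.card_mul_expect, sum_sub_distrib,
            sum_const, nsmul_one, card_univ]
      _ ≤ #A * (β / 3) + #Aᶜ * 1 :=
          card_mul_expect_le_add_compl (fun x hx ↦ by linarith [hA x hx])
            (fun x _ ↦ by linarith [(hd x).1])
  rw [← card_add] at mean_le comean_le ⊢
  exact div_three_mul_sq_le_mul (Nat.cast_nonneg _) (Nat.cast_nonneg _) hβ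
    (by nlinarith) (by nlinarith)

lemma exists_normalizedDegree_mem_Icc (hsymm : ∀ x y, w x y = w y x)
    (hw : ∀ x y, x ≠ y → w x y ∈ Set.Icc 0 1) {β : ℝ} (hβ : 0 < β)
    (hmean : 𝔼 x, normalizedDegree w x ∈ Set.Icc β (1 - β)) :
    ∃ x, normalizedDegree w x ∈ Set.Icc (β / 3) (1 - β / 3) := by
  by_contra! hd
  have card_pos : (0 : ℝ) < Fintype.card V := by
    obtain ⟨x, -⟩ := exists_ne_zero_of_expect_ne_zero (hβ.trans_le hmean.1).ne'
    exact_mod_cast Fintype.card_pos_iff.2 ⟨x⟩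
  have degree_mem (x : V) : normalizedDegree w x ∈ Set.Icc 0 1 :=
    expect_mem_Icc_zero_one fun y hy ↦ hw x y <| by simpa [eq_comm] using hy
  let A : Finset V := {x | 1 - β / 3 ≤ normalizedDegree w x}
  have hA : ∀ x ∈ A, 1 - β / 3 ≤ normalizedDegree w x := fun x hx ↦ (mem_filter.1 hx).2
  have hAc : ∀ x ∈ Aᶜ, normalizedDegree w x ≤ β / 3 := by
    intro x hx
    by_contra! hlt
    have degree_lt : normalizedDegree w x < 1 - β / 3 :=
      not_le.1 fun h ↦ mem_compl.1 hx (mem_filter.2 ⟨mem_univ x, h⟩)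
    exact hd x ⟨hlt.le, degree_lt.le⟩
  have card_add : (#A + #Aᶜ : ℝ) = Fintype.card V := mod_cast card_add_card_compl A
  have upper : (#A * #Aᶜ : ℝ) ≤ Fintype.card V * ((Fintype.card V - 1) * (β / 3)) :=
    card_add ▸ card_mul_card_le_of_normalizedDegree hsymm hw disjoint_compl_right hA hAc
  have lower : β / 3 * Fintype.card V ^ 2 ≤ (#A * #Aᶜ : ℝ) :=
    div_three_mul_card_sq_le_of_expect_mem_Icc degree_mem hβ.le hmean hA hAc
  linarith [mul_pos hβ card_pos]

end WeightedGraph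

section Hypergraph

variable {V : Type*} [Fintype V] [DecidableEq V] {r : ℕ} {E : Finset (Finset V)} {S : Finset V}

/-- The density of the link of the vertex set `S` in an `r`-uniform hypergraph `E`, that is, the
number of edges containing `S` divided by the number of `r`-sets containing `S`. It is the density
of `E` for `S = ∅`, of the link of `v` for `S = {v}`, and the normalised codegree of `x` and `y` for
`S = {x, y}`. It is `0` if there are fewer than `r` vertices. -/
noncomputable def linkDensity (r : ℕ) (E : Finset (Finset V)) (S : Finset V) : ℝ :=
  #{e ∈ E | S ⊆ e} / (Fintype.card V - #S).choose (r - #S)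

lemma linkDensity_nonneg : 0 ≤ linkDensity r E S := by
  unfold linkDensity; positivity

lemma linkDensity_le_one (hE : (E : Set (Finset V)).Sized r) (hS : #S ≤ r) :
    linkDensity r E S ≤ 1 := by
  refine div_le_one_of_le₀ ?_ (Nat.cast_nonneg _)
  rw [← card_univ, ← card_filter_powersetCard_subset S univ r (subset_univ S) hS]
  exact_mod_cast card_le_card (filter_subset_filter _ hE.subset_powersetCard_univ)

lemma sum_compl_card_filter_insert_subset (hE : (E : Set (Finset V)).Sized r) :
    ∑ y ∈ Sᶜ, #{e ∈ E | insert y S ⊆ e} = (r - #S) * #{e ∈ E | S ⊆ e} := by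
  calc ∑ y ∈ Sᶜ, #{e ∈ E | insert y S ⊆ e}
      = ∑ y ∈ Sᶜ, #{e ∈ {e ∈ E | S ⊆ e} | y ∈ e} := by
        simp only [insert_subset_iff, filter_filter, and_comm]
    _ = ∑ e ∈ E with S ⊆ e, #{y ∈ Sᶜ | y ∈ e} :=
        sum_card_bipartiteAbove_eq_sum_card_bipartiteBelow _
    _ = ∑ e ∈ E with S ⊆ e, (r - #S) := by
        refine sum_congr rfl fun e he ↦ ?_
        obtain ⟨heE, hSe⟩ := mem_filter.1 he
        rw [filter_mem_eq_inter, inter_comm, ← sdiff_eq_inter_compl, card_sdiff_of_subset hSe,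
          hE heE]
    _ = (r - #S) * #{e ∈ E | S ⊆ e} := by rw [sum_const, smul_eq_mul, mul_comm]

lemma linkDensity_eq_expect (hE : (E : Set (Finset V)).Sized r) (hS : #S < r) :
    linkDensity r E S = 𝔼 y ∈ Sᶜ, linkDensity r E (insert y S) := by
  have expect_insert : 𝔼 y ∈ Sᶜ, linkDensity r E (insert y S) =
      (r - #S : ℕ) * #{e ∈ E | S ⊆ e} / #Sᶜ / (#Sᶜ - 1).choose (r - #S - 1) := by
    rw [← Nat.cast_mul, ← sum_compl_card_filter_insert_subset hE, Nat.cast_sum,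
      ← expect_eq_sum_div_card, expect_div]
    refine expect_congr rfl fun y hy ↦ ?_
    rw [linkDensity, card_insert_of_notMem (mem_compl.1 hy), card_compl, Nat.sub_sub, Nat.sub_sub]
  rw [expect_insert, linkDensity, ← card_compl]
  obtain ⟨k, hk⟩ := Nat.exists_eq_add_one.2 (Nat.sub_pos_of_lt hS)
  rw [hk, Nat.add_sub_cancel]
  rcases #Sᶜ with _ | m
  · simp
  · have choose_eq : ((m + 1 : ℕ) : ℝ) * m.choose k = (k + 1 : ℕ) * (m + 1).choose (k + 1) :=
      mod_cast (Nat.add_one_mul_choose_eq m k).trans (mul_comm _ _)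
    rw [Nat.add_sub_cancel, div_div, choose_eq, mul_div_mul_left _ _ (by positivity)]

lemma densH_eq_linkDensity {V : Type} [Fintype V] [DecidableEq V] (E : Finset (Finset V)) :
    densH E = linkDensity 3 E ∅ := by
  simp [densH, linkDensity]

lemma dLinkDensity_eq_linkDensity {V : Type} [Fintype V] [DecidableEq V] (E : Finset (Finset V))
    (v : V) : dLinkDensity E v = linkDensity 3 E {v} := by
  simp [dLinkDensity, linkDensity]

theorem link_graph_density_general (hr : 2 ≤ r) (hE : (E : Set (Finset V)).Sized r) {β : ℝ}
    (hβ : 0 < β) (hdensity : linkDensity r E ∅ ∈ Set.Icc β (1 - β)) :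
    ∃ v, linkDensity r E {v} ∈ Set.Icc (β / 3) (1 - β / 3) := by
  have link_eq (x : V) :
      linkDensity r E {x} = normalizedDegree (fun x y ↦ linkDensity r E {x, y}) x := by
    simp only [normalizedDegree, linkDensity_eq_expect hE ((card_singleton x).trans_lt hr),
      pair_comm]
  have density_eq : linkDensity r E ∅ = 𝔼 x, linkDensity r E {x} := by
    simp [linkDensity_eq_expect hE (card_empty.trans_lt (by lia))]
  simp only [density_eq, link_eq] at hdensity ⊢
  exact exists_normalizedDegree_mem_Icc (fun x y ↦ by rw [pair_comm])
    (fun x y _ ↦ ⟨linkDensity_nonneg, linkDensity_le_one hE (card_le_two.trans hr)⟩) hβ hdensity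

end Hypergraph

/-- If the density of `H` is bounded away from 0 and 1, then some vertex has a link graph
whose density is bounded away from 0 and 1. -/
theorem link_graph_density {V : Type} [Fintype V] [DecidableEq V]
    (E : Finset (Finset V)) (hE : ∀ e ∈ E, e.card = 3)
    (β : ℝ) (hβ : 0 < β)
    (hn : (Fintype.card V : ℝ) ≥ 4 / β)
    (hd1 : β ≤ densH E) (hd2 : densH E ≤ 1 - β) :
    ∃ v : V, β ^ 2 / 16 ≤ dLinkDensity E v ∧ dLinkDensity E v ≤ 1 - β ^ 2 / 16 := by
  rw [densH_eq_linkDensity] at hd1 hd2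
  obtain ⟨v, hlower, hupper⟩ := link_graph_density_general (by norm_num) hE hβ ⟨hd1, hd2⟩
  have sq_le : β ^ 2 / 16 ≤ β / 3 := by nlinarith
  exact ⟨v, by rw [dLinkDensity_eq_linkDensity]; constructor <;> linarith⟩
end

section
/- Let H be a 3-uniform hypergraph with n vertices and density 0 < d ≤ 1. Then H contains an independent set of size at least min{ n/2, sqrt(3/(4d)) }. -/
open Finset

/-!
An `r`-uniform hypergraph is treated by the deletion method. A random vertex set that contains each
vertex independently with probability `p = m / n` has expected size `m` and spans on average at most
`d * n.choose r * p ^ r ≤ d * m ^ r / r!` edges. Some vertex set therefore does at least as well as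
this average, and deleting one vertex from each edge that it spans leaves an independent set. The
expected number of deleted vertices is at most `m / 2` as soon as `2 * d * m ^ (r - 1) ≤ r!`, and
the largest such `m ≤ n` is twice the required size.
-/

open MeasureTheory ProbabilityTheory
open scoped unitInterval

section RandomSubset

variable {ι κ : Type*} {u : Set ι} (p : I)

theorem measurableSet_superset (s : Finset ι) :
    MeasurableSet {t : Set ι | ↑s ⊆ t} := by
  have : {t : Set ι | ↑s ⊆ t} = ⋂ i ∈ s, {t | i ∈ t} := by
    ext
    simp [Set.subset_def]
  exact this ▸ s.measurableSet_biInter fun i _ ↦ measurableSet_mem i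

theorem setBernoulli_real_superset {s : Finset ι} (hs : ↑s ⊆ u) :
    setBer(u, p).real {t | ↑s ⊆ t} = (p : ℝ) ^ #s := by
  have hpi : (fun q : ι → Prop ↦ {i | q i}) ⁻¹' {t | ↑s ⊆ t} = Set.pi s fun _ ↦ {True} := by
    ext
    simp [Set.subset_def]
  have hmeasure : setBer(u, p) {t | ↑s ⊆ t} = (unitInterval.toNNReal p : ENNReal) ^ #s := by
    rw [setBernoulli_apply', hpi, Measure.infinitePi_pi _ fun _ _ ↦ .singleton _,
      ← Finset.prod_const]
    exact Finset.prod_congr rfl fun i hi ↦ by simp [hs hi]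
  simp [measureReal_def, hmeasure]

open Classical in
theorem integrable_card_filter_coe_subset (s : Finset κ) (e : κ → Finset ι) :
    Integrable (fun t : Set ι ↦ (#{i ∈ s | ↑(e i) ⊆ t} : ℝ)) setBer(u, p) := by
  simp only [natCast_card_filter]
  exact integrable_finsetSum _ fun i _ ↦
    (integrable_const 1).indicator (measurableSet_superset (e i))

open Classical in
theorem integral_card_filter_coe_subset (s : Finset κ) {e : κ → Finset ι}
    (he : ∀ i ∈ s, ↑(e i) ⊆ u) :
    ∫ t, (#{i ∈ s | ↑(e i) ⊆ t} : ℝ) ∂setBer(u, p) = ∑ i ∈ s, (p : ℝ) ^ #(e i) := by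
  have hmeas (i : κ) := measurableSet_superset (e i)
  calc ∫ t, (#{i ∈ s | ↑(e i) ⊆ t} : ℝ) ∂setBer(u, p)
      = ∫ t, ∑ i ∈ s, {t : Set ι | ↑(e i) ⊆ t}.indicator 1 t ∂setBer(u, p) := by
        simp only [natCast_card_filter, Set.indicator_apply, Set.mem_ofPred_eq, Pi.one_apply]
    _ = ∑ i ∈ s, setBer(u, p).real {t | ↑(e i) ⊆ t} := by
        rw [integral_finsetSum _ fun i _ ↦ (integrable_const 1).indicator (hmeas i)]
        simp only [integral_indicator_one (hmeas _)]
    _ = ∑ i ∈ s, (p : ℝ) ^ #(e i) :=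
        sum_congr rfl fun i hi ↦ setBernoulli_real_superset p (he i hi)

end RandomSubset

section Hypergraph

variable {V : Type*}

/-- A vertex set is independent in the hypergraph with edge set `E` if it contains no edge. The
vertex set of the hypergraph is the whole type `V`. -/
def IsIndependentSet (E : Finset (Finset V)) (S : Finset V) : Prop :=
  ∀ e ∈ E, ¬ e ⊆ S

theorem exists_le_card_sub_card_filter_subset [Fintype V] [DecidableEq V]
    (E : Finset (Finset V)) (p : I) :
    ∃ S : Finset V, (Fintype.card V : ℝ) * p - ∑ e ∈ E, (p : ℝ) ^ #e ≤
      (#S : ℝ) - #{e ∈ E | e ⊆ S} := by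
  classical
  have hvert := integrable_card_filter_coe_subset (u := Set.univ) p (univ : Finset V) singleton
  have hedge := integrable_card_filter_coe_subset (u := Set.univ) p E id
  obtain ⟨t, ht⟩ := exists_integral_le (hvert.sub hedge)
  refine ⟨t.toFinset, ?_⟩
  simp only [Pi.sub_apply] at ht
  rw [integral_sub hvert hedge, integral_card_filter_coe_subset p _ (by simp),
    integral_card_filter_coe_subset p _ (by simp)] at ht
  simpa [Set.subset_toFinset] using ht

theorem exists_transversal_card_le {F : Finset (Finset V)} (hF : ∀ e ∈ F, e.Nonempty) :
    ∃ T : Finset V, #T ≤ #F ∧ ∀ e ∈ F, ¬ Disjoint e T := by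
  classical
  choose v hv using hF
  refine ⟨F.attach.image fun e : F ↦ v e e.2, card_image_le.trans_eq F.card_attach, fun e he ↦ ?_⟩
  exact not_disjoint_iff.2 ⟨v e he, hv e he, mem_image_of_mem _ (mem_attach F ⟨e, he⟩)⟩

theorem exists_isIndependentSet_card_le_add [DecidableEq V] {E : Finset (Finset V)}
    (hE : ∀ e ∈ E, e.Nonempty) (S : Finset V) :
    ∃ T, IsIndependentSet E T ∧ #S ≤ #T + #{e ∈ E | e ⊆ S} := by
  obtain ⟨D, hDcard, hD⟩ := exists_transversal_card_le (F := {e ∈ E | e ⊆ S})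
    fun e he ↦ hE e (mem_filter.1 he).1
  refine ⟨S \ D, fun e he heT ↦ ?_, by have := le_card_sdiff D S; omega⟩
  obtain ⟨heS, hdisj⟩ := subset_sdiff.1 heT
  exact hD e (mem_filter.2 ⟨he, heS⟩) hdisj

variable [Fintype V]

theorem exists_isIndependentSet_le_card {E : Finset (Finset V)}
    (hE : ∀ e ∈ E, e.Nonempty) (p : I) :
    ∃ S, IsIndependentSet E S ∧
      (Fintype.card V : ℝ) * p - ∑ e ∈ E, (p : ℝ) ^ #e ≤ #S := by
  classical
  obtain ⟨S, hS⟩ := exists_le_card_sub_card_filter_subset E p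
  obtain ⟨T, hT, hST⟩ := exists_isIndependentSet_card_le_add hE S
  refine ⟨T, hT, hS.trans ?_⟩
  rw [sub_le_iff_le_add]
  exact_mod_cast hST

theorem exists_isIndependentSet_half_le_card {E : Finset (Finset V)} {r : ℕ} (hr : r ≠ 0)
    (hE : ∀ e ∈ E, #e = r) {d m : ℝ} (hd : 0 ≤ d)
    (hdens : #E ≤ d * (Fintype.card V).choose r) (hm : 0 ≤ m) (hmn : m ≤ Fintype.card V)
    (hmd : 2 * d * m ^ (r - 1) ≤ r.factorial) :
    ∃ S, IsIndependentSet E S ∧ m / 2 ≤ #S := by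
  set n : ℝ := (Fintype.card V : ℝ)
  let p : I := ⟨m / n, by positivity, div_le_one_of_le₀ hmn (by positivity)⟩
  obtain ⟨S, hS, hcard⟩ := exists_isIndependentSet_le_card
    (fun e he ↦ card_pos.1 (hE e he ▸ hr.bot_lt)) p
  refine ⟨S, hS, le_trans ?_ hcard⟩
  have hnp : n * p = m := mul_div_cancel_of_imp' fun hn ↦ by linarith
  have hedges : ∑ e ∈ E, (p : ℝ) ^ #e ≤ m / 2 :=
    calc ∑ e ∈ E, (p : ℝ) ^ #e = #E * (p : ℝ) ^ r := by
          rw [sum_congr rfl fun e he ↦ by rw [hE e he], sum_const, nsmul_eq_mul]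
      _ ≤ d * (n ^ r / r.factorial) * (p : ℝ) ^ r := by
          have hchoose := Nat.choose_le_pow_div (α := ℝ) r (Fintype.card V)
          gcongr
          exact hdens.trans (mul_le_mul_of_nonneg_left hchoose hd)
      _ = d * (n * p) ^ r / r.factorial := by ring
      _ = 2 * d * m ^ (r - 1) / r.factorial * (m / 2) := by
          rw [hnp, ← mul_pow_sub_one hr m]
          ring
      _ ≤ m / 2 := mul_le_of_le_one_left (by positivity)
          (div_le_one_of_le₀ hmd (by positivity))
  linarith

theorem probabilistic_independent_set_general {E : Finset (Finset V)} {r : ℕ} (hr : 2 ≤ r)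
    (hE : ∀ e ∈ E, #e = r) {d : ℝ} (hd : 0 < d)
    (hdens : d = (#E : ℝ) / (Fintype.card V).choose r) :
    ∃ S, IsIndependentSet E S ∧
      min ((Fintype.card V : ℝ) / 2) ((r.factorial / (2 ^ r * d)) ^ (1 / (r - 1 : ℝ))) ≤ #S := by
  set x : ℝ := (r.factorial / (2 ^ r * d)) ^ (1 / (r - 1 : ℝ)) with hx_def
  have hx_pow : x ^ (r - 1) = r.factorial / (2 ^ r * d) := by
    rw [hx_def, ← Nat.cast_pred (by omega), one_div]
    exact Real.rpow_inv_natCast_pow (by positivity) (by omega)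
  have hchoose : ((Fintype.card V).choose r : ℝ) ≠ 0 := fun h ↦ by simp [h, hd.ne'] at hdens
  rw [show x = 2 * x / 2 by ring, min_div_div_right zero_le_two]
  refine exists_isIndependentSet_half_le_card (by omega) hE hd.le
    ((div_eq_iff hchoose).1 hdens.symm).le (by positivity) (min_le_left _ _) ?_
  calc 2 * d * min (Fintype.card V : ℝ) (2 * x) ^ (r - 1)
      ≤ 2 * d * (2 * x) ^ (r - 1) := by gcongr; exact min_le_right _ _
    _ = 2 ^ r * d * x ^ (r - 1) := by
        rw [← mul_pow_sub_one (by omega : r ≠ 0) (2 : ℝ)]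
        ring
    _ = r.factorial := by
        rw [hx_pow]
        field_simp

end Hypergraph

/-- Every 3-uniform hypergraph on `n` vertices with density `0 < d ≤ 1` contains an
independent set of size at least `min(n/2, √(3/(4d)))`. -/
theorem probabilistic_independent_set {V : Type} [Fintype V] [DecidableEq V]
    (E : Finset (Finset V)) (hE : ∀ e ∈ E, e.card = 3)
    (d : ℝ) (hd0 : 0 < d) (hd1 : d ≤ 1)
    (hdens : d = (E.card : ℝ) / ((Fintype.card V).choose 3 : ℝ)) :
    ∃ S : Finset V, (∀ t ⊆ S, t.card = 3 → t ∉ E) ∧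
      (S.card : ℝ) ≥ min ((Fintype.card V : ℝ) / 2) (Real.sqrt (3 / (4 * d))) := by
  obtain ⟨S, hS, hcard⟩ := probabilistic_independent_set_general (r := 3) (by norm_num) hE
    hd0 hdens
  refine ⟨S, fun t ht _ htE ↦ hS t htE ht, ?_⟩
  have hratio : 3 / (4 * d) = (Nat.factorial 3 : ℝ) / (2 ^ 3 * d) := by
    norm_num [Nat.factorial]
    field_simp
    norm_num
  rwa [show ((3 : ℕ) : ℝ) - 1 = 2 by norm_num, ← Real.sqrt_eq_rpow, ← hratio] at hcard
end

section
/- Let H be a 3-uniform hypergraph with n vertices and density 0 ≤ d < 1. Then H contains a clique of size at least min{ n/2, sqrt(3/(4(1−d))) }. -/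
open Finset

/-!
Sample a set `S` of `m = ⌈2x⌉` vertices uniformly at random. In a `(k+1)`-uniform hypergraph of
density `d` the expected number of non-edges inside `S` is
`(1 - d) * m.choose (k + 1) ≤ (1 - d) * (2x)^k * m / (k+1)!`, which is at most `m / 2` as soon as
`2 * (1 - d) * (2x)^k ≤ (k+1)!`. Deleting one vertex of each non-edge inside a set `S` with at most
the expected number of them leaves a clique on at least `m / 2 ≥ x` vertices.
For `k = 2` the condition on `x` reads `x ≤ √(3 / (4 * (1 - d)))`.
-/

lemma exists_subset_avoiding_card_le {V : Type*} [DecidableEq V]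
    {N : Finset (Finset V)} (hN : ∅ ∉ N) (S : Finset V) :
    ∃ T ⊆ S, (∀ e ∈ N, ¬ e ⊆ T) ∧ #S ≤ #T + #{e ∈ N | e ⊆ S} := by
  have hnonempty (e : {e ∈ N | e ⊆ S}) : (e : Finset V).Nonempty :=
    nonempty_iff_ne_empty.2 fun he ↦ hN (he ▸ (mem_filter.1 e.2).1)
  choose v hv using hnonempty
  refine ⟨S \ univ.image v, sdiff_subset, fun e he heT ↦ ?_, ?_⟩
  · let e' : {e ∈ N | e ⊆ S} := ⟨e, mem_filter.2 ⟨he, heT.trans sdiff_subset⟩⟩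
    exact (mem_sdiff.1 (heT (hv e'))).2 (mem_image_of_mem v (mem_univ e'))
  · have himage : #(univ.image v) ≤ #{e ∈ N | e ⊆ S} := by
      simpa using card_image_le (s := univ) (f := v)
    have hsdiff := le_card_sdiff (univ.image v) S
    lia

section Hypergraph

variable {V : Type*} {r : ℕ}

/-- `S` is a clique of the `r`-uniform hypergraph with edge set `E`; every set of fewer than `r`
vertices is one. -/
def IsUniformClique (r : ℕ) (E : Finset (Finset V)) (S : Finset V) : Prop :=
  ∀ t ⊆ S, #t = r → t ∈ E

variable [Fintype V]

/-- The density of the `r`-uniform hypergraph with edge set `E`, equal to `0` by the convention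
`x / 0 = 0` when there are fewer than `r` vertices. -/
noncomputable def uniformDensity (r : ℕ) (E : Finset (Finset V)) : ℝ :=
  #E / (Fintype.card V).choose r

lemma uniformDensity_nonneg (r : ℕ) (E : Finset (Finset V)) : 0 ≤ uniformDensity r E := by
  unfold uniformDensity
  positivity

section Complement

variable [DecidableEq V]

/-- The edge set of the complement of the `r`-uniform hypergraph with edge set `E`: the obstructions
to being a clique. -/
def nonedges (r : ℕ) (E : Finset (Finset V)) : Finset (Finset V) :=
  powersetCard r univ \ E

lemma sized_nonedges (r : ℕ) (E : Finset (Finset V)) :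
    (nonedges r E : Set (Finset V)).Sized r :=
  subset_powersetCard_univ_iff.1 sdiff_subset

lemma isUniformClique_iff_forall_nonedges {E : Finset (Finset V)} {S : Finset V} :
    IsUniformClique r E S ↔ ∀ e ∈ nonedges r E, ¬ e ⊆ S := by
  simp only [IsUniformClique, nonedges, mem_sdiff, mem_powersetCard_univ]
  exact forall_congr' fun e ↦ by tauto

lemma uniformDensity_nonedges_le {E : Finset (Finset V)} (hE : (E : Set (Finset V)).Sized r) :
    uniformDensity r (nonedges r E) ≤ 1 - uniformDensity r E := by
  have hcard : #(nonedges r E) + #E = (Fintype.card V).choose r := by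
    rw [nonedges, card_sdiff_add_card_eq_card hE.subset_powersetCard_univ, card_powersetCard,
      card_univ]
  rw [le_sub_iff_add_le, uniformDensity, uniformDensity, ← add_div, ← Nat.cast_add, hcard]
  exact div_self_le_one _

lemma card_filter_powersetCard_univ_superset (e : Finset V) (m : ℕ) :
    (#{S ∈ powersetCard m univ | e ⊆ S} : ℝ) =
      (Fintype.card V).choose m * (m.choose #e / (Fintype.card V).choose #e) := by
  rcases lt_or_ge m #e with hm | hm
  · have hempty : {S ∈ powersetCard m (univ : Finset V) | e ⊆ S} = ∅ :=
      filter_eq_empty_iff.2 fun S hS heS ↦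
        hm.not_ge ((card_le_card heS).trans_eq (mem_powersetCard_univ.1 hS))
    simp [hempty, Nat.choose_eq_zero_of_lt hm]
  · have hpos : ((Fintype.card V).choose #e : ℝ) ≠ 0 :=
      mod_cast (Nat.choose_pos e.card_le_univ).ne'
    rw [card_filter_powersetCard_subset e univ m e.subset_univ hm, card_univ, ← mul_div_assoc,
      eq_div_iff hpos, mul_comm]
    exact_mod_cast (Nat.choose_mul hm).symm

lemma sum_card_filter_subset {N : Finset (Finset V)} (hN : (N : Set (Finset V)).Sized r) (m : ℕ) :
    ∑ S ∈ powersetCard m univ, (#{e ∈ N | e ⊆ S} : ℝ) =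
      (Fintype.card V).choose m * (uniformDensity r N * m.choose r) :=
  calc ∑ S ∈ powersetCard m univ, (#{e ∈ N | e ⊆ S} : ℝ)
      = ∑ e ∈ N, (#{S ∈ powersetCard m univ | e ⊆ S} : ℝ) := by
        exact_mod_cast (sum_card_bipartiteAbove_eq_sum_card_bipartiteBelow
          (s := N) (t := powersetCard m univ) (· ⊆ ·)).symm
    _ = ∑ _e ∈ N, (Fintype.card V).choose m * (m.choose r / (Fintype.card V).choose r : ℝ) :=
        sum_congr rfl fun _ he ↦ by rw [card_filter_powersetCard_univ_superset, hN he]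
    _ = (Fintype.card V).choose m * (uniformDensity r N * m.choose r) := by
        rw [sum_const, nsmul_eq_mul, uniformDensity]
        ring

lemma exists_card_filter_subset_le {N : Finset (Finset V)} (hN : (N : Set (Finset V)).Sized r)
    {m : ℕ} (hm : m ≤ Fintype.card V) :
    ∃ S : Finset V, #S = m ∧ #{e ∈ N | e ⊆ S} ≤ uniformDensity r N * m.choose r := by
  have hne : (powersetCard m (univ : Finset V)).Nonempty := powersetCard_nonempty.2 hm
  obtain ⟨S, hS, hle⟩ := exists_le_of_sum_le hne
    (f := fun S ↦ (#{e ∈ N | e ⊆ S} : ℝ)) (g := fun _ ↦ uniformDensity r N * m.choose r) <| by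
      rw [sum_card_filter_subset hN, sum_const, card_powersetCard, card_univ, nsmul_eq_mul]
  exact ⟨S, mem_powersetCard_univ.1 hS, hle⟩

end Complement

theorem exists_isUniformClique_le_card (hr : r ≠ 0) {E : Finset (Finset V)}
    (hE : (E : Set (Finset V)).Sized r) {m : ℕ} (hm : m ≤ Fintype.card V) :
    ∃ T, IsUniformClique r E T ∧ m - (1 - uniformDensity r E) * m.choose r ≤ #T := by
  classical
  have hN := sized_nonedges r E
  obtain ⟨S, rfl, hfew⟩ := exists_card_filter_subset_le hN hm
  obtain ⟨T, -, hT, hcard⟩ :=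
    exists_subset_avoiding_card_le (fun h ↦ hr (hN h).symm : ∅ ∉ nonedges r E) S
  refine ⟨T, isUniformClique_iff_forall_nonedges.2 hT, ?_⟩
  rw [sub_le_iff_le_add]
  calc (#S : ℝ) ≤ #T + #{e ∈ nonedges r E | e ⊆ S} := mod_cast hcard
    _ ≤ #T + uniformDensity r (nonedges r E) * (#S).choose r := by gcongr
    _ ≤ #T + (1 - uniformDensity r E) * (#S).choose r := by
      gcongr
      exact uniformDensity_nonedges_le hE

end Hypergraph

section Estimates

open scoped Nat

lemma choose_ceil_succ_le (y : ℝ) (k : ℕ) :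
    (⌈y⌉₊.choose (k + 1) : ℝ) ≤ y ^ k * ⌈y⌉₊ / (k + 1)! := by
  rcases hm : ⌈y⌉₊ with _ | m
  · simp
  have hmy : (m : ℝ) ≤ y := (Nat.lt_ceil.1 (hm ▸ m.lt_succ_self)).le
  calc ((m + 1).choose (k + 1) : ℝ) = (m + 1 : ℕ) * m.choose k / (k + 1 : ℕ) := by
        rw [eq_div_iff (by positivity)]
        exact_mod_cast (Nat.add_one_mul_choose_eq m k).symm
    _ ≤ (m + 1 : ℕ) * (y ^ k / k !) / (k + 1 : ℕ) := by
        gcongr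
        exact (Nat.choose_le_pow_div k m).trans (by gcongr)
    _ = y ^ k * (m + 1 : ℕ) / (k + 1)! := by
        rw [Nat.factorial_succ]
        push_cast
        field_simp

lemma mul_sq_two_mul_min_sqrt_le {a q : ℝ} (ha : 0 ≤ a) (hq : 0 < q) :
    q * (2 * min a (√(3 / (4 * q)))) ^ 2 ≤ 3 :=
  calc q * (2 * min a (√(3 / (4 * q)))) ^ 2 ≤ q * (2 * √(3 / (4 * q))) ^ 2 := by
        gcongr
        exact min_le_right _ _
    _ = 3 := by
        rw [mul_pow, Real.sq_sqrt (by positivity)]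
        field_simp
        norm_num

end Estimates

open scoped Nat in
theorem probabilistic_clique_general {V : Type*} [Fintype V] {k : ℕ} {E : Finset (Finset V)}
    (hE : (E : Set (Finset V)).Sized (k + 1)) {x : ℝ} (hxn : x ≤ Fintype.card V / 2)
    (hxd : 2 * ((1 - uniformDensity (k + 1) E) * (2 * x) ^ k) ≤ (k + 1)!) :
    ∃ S, IsUniformClique (k + 1) E S ∧ x ≤ #S := by
  classical
  set m := ⌈2 * x⌉₊
  have hmn : m ≤ Fintype.card V := Nat.ceil_le.2 (by linarith)
  obtain ⟨S, hS, hcard⟩ := exists_isUniformClique_le_card k.succ_ne_zero hE hmn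
  have hq : 0 ≤ 1 - uniformDensity (k + 1) E :=
    (uniformDensity_nonneg _ _).trans (uniformDensity_nonedges_le hE)
  have hloss : (1 - uniformDensity (k + 1) E) * m.choose (k + 1) ≤ m / 2 :=
    calc (1 - uniformDensity (k + 1) E) * m.choose (k + 1)
        ≤ (1 - uniformDensity (k + 1) E) * ((2 * x) ^ k * m / (k + 1)!) := by
          gcongr
          exact choose_ceil_succ_le _ _
      _ = 2 * ((1 - uniformDensity (k + 1) E) * (2 * x) ^ k) * (m / 2) / (k + 1)! := by ring
      _ ≤ (k + 1)! * (m / 2) / (k + 1)! := by gcongr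
      _ = m / 2 := mul_div_cancel_left₀ _ (by positivity)
  have hxm : 2 * x ≤ m := Nat.le_ceil _
  exact ⟨S, hS, by linarith⟩

/-- Every 3-uniform hypergraph on `n` vertices with density `0 ≤ d < 1` contains a clique
of size at least `min(n/2, √(3/(4(1-d))))`. -/
theorem probabilistic_clique {V : Type} [Fintype V] [DecidableEq V]
    (E : Finset (Finset V)) (hE : ∀ e ∈ E, e.card = 3)
    (d : ℝ) (hd0 : 0 ≤ d) (hd1 : d < 1)
    (hdens : d = (E.card : ℝ) / ((Fintype.card V).choose 3 : ℝ)) :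
    ∃ S : Finset V, (∀ t ⊆ S, t.card = 3 → t ∈ E) ∧
      (S.card : ℝ) ≥ min ((Fintype.card V : ℝ) / 2) (Real.sqrt (3 / (4 * (1 - d)))) := by
  have hbound := mul_sq_two_mul_min_sqrt_le
    (a := (Fintype.card V : ℝ) / 2) (by positivity) (sub_pos.2 hd1)
  refine probabilistic_clique_general (k := 2) hE (min_le_left _ _) ?_
  have hfactorial : ((2 + 1).factorial : ℝ) = 6 := by norm_num [Nat.factorial]
  rw [uniformDensity, ← hdens, hfactorial]
  linarith
end
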